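/- arXiv:1407.8075 — 2 statements merged into one kernel-verified Lean document; each statement's English description precedes it below -/
import Mathlib

section
/- Every rational cone in P³ (an irreducible reduced cone over a rational plane curve) is Cremona equivalent to a plane. -/
/-!
Concrete framework: projective space over a field `k` as `Projectivization`,
hypersurfaces as zero loci of homogeneous polynomials, rational maps given by
tuples of homogeneous polynomials, birational maps between (closed) subvarieties,
and Cremona equivalence of divisors.
-/

open MvPolynomial

/-- Projective `n`-space over `k`, as the projectivization of `k^{n+1}`. -/
abbrev ProjSp (k : Type) [Field k] (n : ℕ) : Type :=
  Projectivization k (Fin (n + 1) → k)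

namespace ProjSp

variable (k : Type) [Field k]

/-- The zero locus in `ℙⁿ` of a (homogeneous) polynomial. -/
def zeros {n : ℕ} (f : MvPolynomial (Fin (n + 1)) k) : Set (ProjSp k n) :=
  {x | eval x.rep f = 0}

/-- `D ⊆ ℙⁿ` is an irreducible and reduced divisor (hypersurface): it is the zero
locus of an irreducible homogeneous polynomial of positive degree. -/
def IsIrredDivisor {n : ℕ} (D : Set (ProjSp k n)) : Prop :=
  ∃ (d : ℕ) (f : MvPolynomial (Fin (n + 1)) k),
    0 < d ∧ f.IsHomogeneous d ∧ Irreducible f ∧ D = zeros k f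

/-- A hyperplane in `ℙⁿ`: the zero locus of a nonzero linear form. -/
def IsHyperplane {n : ℕ} (H : Set (ProjSp k n)) : Prop :=
  ∃ f : MvPolynomial (Fin (n + 1)) k, f ≠ 0 ∧ f.IsHomogeneous 1 ∧ H = zeros k f

/-- The line through two points of `ℙⁿ` (the set of points whose representing line
lies in the plane spanned by the two points). -/
def lineThrough {n : ℕ} (p q : ProjSp k n) : Set (ProjSp k n) :=
  {z | z.submodule ≤ p.submodule ⊔ q.submodule}

/-- `S` is a cone with vertex `p`: `p ∈ S` and `S` is a union of lines through `p`.
For an irreducible divisor of degree `d` this is equivalent to `p` being a point of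
multiplicity `d` on `S`. -/
def IsConeWithVertex {n : ℕ} (S : Set (ProjSp k n)) (p : ProjSp k n) : Prop :=
  p ∈ S ∧ ∀ x ∈ S, lineThrough k p x ⊆ S

/-- The cone with vertex `p` over a set `A ⊆ ℙⁿ`: the union of the lines joining `p`
to the points of `A`. -/
def coneOver {n : ℕ} (p : ProjSp k n) (A : Set (ProjSp k n)) : Set (ProjSp k n) :=
  ⋃ a ∈ A, lineThrough k p a

/-- The data of a rational map `ℙⁿ ⇢ ℙᵐ`: an `(m+1)`-tuple of homogeneous polynomials
of a common degree in `n+1` variables. -/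
structure RatMap (n m : ℕ) where
  deg : ℕ
  comp : Fin (m + 1) → MvPolynomial (Fin (n + 1)) k
  homog : ∀ i, (comp i).IsHomogeneous deg

variable {k}

/-- The rational map is defined at `x` if not all of its components vanish at `x`. -/
def RatMap.Defined {n m : ℕ} (F : RatMap k n m) (x : ProjSp k n) : Prop :=
  (fun i => eval x.rep (F.comp i)) ≠ 0

open scoped Classical in
/-- The value of a rational map at a point (junk value where undefined). -/
noncomputable def RatMap.app {n m : ℕ} (F : RatMap k n m) (x : ProjSp k n) :
    ProjSp k m :=
  if h : (fun i => eval x.rep (F.comp i)) ≠ 0 then Projectivization.mk k _ h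
  else Classical.arbitrary _

variable (k)

/-- `F` (with inverse `G`) restricts to a birational map from `A ⊆ ℙⁿ` onto `B ⊆ ℙᵐ`:
there are hypersurface complements, each meeting `A` resp. `B`, on which `F` and `G`
are defined, map `A` into `B` (resp. `B` into `A`) and are mutually inverse.  For
irreducible closed `A`, `B` this says exactly that `F` induces a birational map
`A ⇢ B`, i.e. that the strict transform (proper image) of `A` under `F` is `B`. -/
def IsBirationalOn {n m : ℕ} (F : RatMap k n m) (G : RatMap k m n)
    (A : Set (ProjSp k n)) (B : Set (ProjSp k m)) : Prop :=
  ∃ (u : MvPolynomial (Fin (n + 1)) k) (v : MvPolynomial (Fin (m + 1)) k)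
    (du dv : ℕ), u.IsHomogeneous du ∧ v.IsHomogeneous dv ∧
    ¬ A ⊆ zeros k u ∧ ¬ B ⊆ zeros k v ∧
    (∀ x ∈ A \ zeros k u,
      F.Defined x ∧ F.app x ∈ B ∧ G.Defined (F.app x) ∧ G.app (F.app x) = x) ∧
    (∀ y ∈ B \ zeros k v,
      G.Defined y ∧ G.app y ∈ A ∧ F.Defined (G.app y) ∧ F.app (G.app y) = y)

/-- `A ⊆ ℙⁿ` and `B ⊆ ℙᵐ` are birational (as abstract varieties). -/
def Birational {n m : ℕ} (A : Set (ProjSp k n)) (B : Set (ProjSp k m)) : Prop :=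
  ∃ (F : RatMap k n m) (G : RatMap k m n), IsBirationalOn k F G A B

/-- Two divisors `D, D' ⊆ ℙⁿ` are Cremona equivalent: there is a birational self-map
`Φ` of `ℙⁿ` (a Cremona transformation) whose strict transform of `D` is `D'`,
i.e. `Φ` restricts to a birational map from `D` onto `D'`. -/
def CremonaEquivalent {n : ℕ} (D D' : Set (ProjSp k n)) : Prop :=
  ∃ (F : RatMap k n n) (G : RatMap k n n),
    IsBirationalOn k F G Set.univ Set.univ ∧ IsBirationalOn k F G D D'

/-- `C` is a rational variety: it is birational to some projective space. -/
def IsRationalVariety {n : ℕ} (C : Set (ProjSp k n)) : Prop :=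
  ∃ m : ℕ, Birational k C (Set.univ : Set (ProjSp k m))

end ProjSp

open ProjSp

open MvPolynomial ProjSp

section Helpers

variable {k : Type} [Field k]

/-- Homogenization (to degree `N`) of a polynomial in `n` variables. -/
noncomputable def hmg {n : ℕ} (N : ℕ) (p : MvPolynomial (Fin n) k) :
    MvPolynomial (Fin (n + 1)) k :=
  ∑ m ∈ p.support, C (coeff m p) * (X 0 ^ (N - m.degree) * ∏ i, X i.succ ^ m i)

lemma hmg_homog {n N : ℕ} {p : MvPolynomial (Fin n) k} (hN : p.totalDegree ≤ N) :
    (hmg N p).IsHomogeneous N := by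
  refine IsHomogeneous.sum _ _ _ fun m hm => ?_
  have h1 : m.degree ≤ N := by
    refine le_trans ?_ hN
    have := le_totalDegree hm
    simpa [Finsupp.degree_apply, Finsupp.sum] using this
  have h2 : (∏ i, (X i.succ : MvPolynomial (Fin (n+1)) k) ^ m i).IsHomogeneous (∑ i, m i) :=
    IsHomogeneous.prod _ _ _ fun i _ => isHomogeneous_X_pow _ _
  have h3 := (isHomogeneous_X_pow (R := k) (0 : Fin (n+1)) (N - m.degree)).mul h2
  have h4 : N - m.degree + ∑ i, m i = N := by
    rw [Finsupp.degree_eq_sum] at h1 ⊢; omega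
  rw [h4] at h3
  exact h3.C_mul _

lemma hmg_aeval {n N : ℕ} {p : MvPolynomial (Fin n) k} (hN : p.totalDegree ≤ N)
    {B : Type*} [CommRing B] [Algebra k B] (w : Fin (n + 1) → B) (v : Fin n → B)
    (hw : ∀ i, w (Fin.succ i) = w 0 * v i) :
    aeval w (hmg N p) = w 0 ^ N * aeval v p := by
  rw [hmg, map_sum, aeval_def v, eval₂_eq', Finset.mul_sum]
  refine Finset.sum_congr rfl fun m hm => ?_
  have h1 : m.degree ≤ N := by
    refine le_trans ?_ hN
    have := le_totalDegree hm
    simpa [Finsupp.degree_apply, Finsupp.sum] using this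
  simp only [map_mul, map_pow, map_prod, aeval_X, aeval_C, hw, mul_pow, Finset.prod_mul_distrib,
    Finset.prod_pow_eq_pow_sum]
  have h4 : N = N - m.degree + ∑ i, m i := by
    rw [Finsupp.degree_eq_sum] at h1 ⊢; omega
  conv_rhs => rw [h4, pow_add]
  ring

lemma homog_aeval {σ : Type*} {d : ℕ} {p : MvPolynomial σ k} (hp : p.IsHomogeneous d)
    {B : Type*} [CommRing B] [Algebra k B] (c : B) (v : σ → B) :
    aeval (fun i => c * v i) p = c ^ d * aeval v p := by
  rw [aeval_def, aeval_def, eval₂_eq, eval₂_eq, Finset.mul_sum]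
  refine Finset.sum_congr rfl fun m hm => ?_
  have : ∑ i ∈ m.support, m i = d := by
    have := hp (mem_support_iff.mp hm)
    simpa [Finsupp.weight_apply, Finsupp.sum] using this
  simp only [mul_pow, Finset.prod_mul_distrib, Finset.prod_pow_eq_pow_sum, this]
  ring

lemma homog_eval {σ : Type*} {d : ℕ} {p : MvPolynomial σ k} (hp : p.IsHomogeneous d)
    (c : k) (v : σ → k) : eval (c • v) p = c ^ d * eval v p := by
  have := homog_aeval hp c v
  simpa [aeval_eq_eval, Pi.smul_def] using this

lemma hmg_eval {n N : ℕ} {p : MvPolynomial (Fin n) k} (hN : p.totalDegree ≤ N)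
    (w : Fin (n + 1) → k) (v : Fin n → k)
    (hw : ∀ i, w (Fin.succ i) = w 0 * v i) :
    eval w (hmg N p) = w 0 ^ N * eval v p := by
  have := hmg_aeval hN w v hw
  simpa [aeval_eq_eval] using this

lemma dvd_of_vanish [IsAlgClosed k] {σ : Type*} [Finite σ] {f p : MvPolynomial σ k}
    (hf : Irreducible f) (h : ∀ v, eval v f = 0 → eval v p = 0) : f ∣ p := by
  have hpr : (Ideal.span {f}).IsPrime :=
    (Ideal.span_singleton_prime hf.ne_zero).2 hf.prime
  rw [← Ideal.mem_span_singleton, ← IsPrime.vanishingIdeal_zeroLocus (K := k) (Ideal.span {f}),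
    mem_vanishingIdeal_iff]
  intro x hx
  rw [zeroLocus_span] at hx
  have := hx f rfl
  simp only [aeval_eq_eval] at this ⊢
  exact h _ this

lemma mem_zeros_mk {n d : ℕ} {f : MvPolynomial (Fin (n + 1)) k} (hf : f.IsHomogeneous d)
    (v : Fin (n + 1) → k) (hv : v ≠ 0) :
    Projectivization.mk k v hv ∈ zeros k f ↔ eval v f = 0 := by
  obtain ⟨a, ha⟩ := Projectivization.exists_smul_eq_mk_rep k v hv
  have : (Projectivization.mk k v hv).rep = (a : k) • v := ha.symm
  simp [zeros, this, homog_eval hf]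

/-- vector-level value of a rational map -/
noncomputable def vecApp {n m : ℕ} (F : RatMap k n m) (v : Fin (n + 1) → k) : Fin (m + 1) → k :=
  fun i => eval v (F.comp i)

lemma vecApp_smul {n m : ℕ} (F : RatMap k n m) (c : k) (v : Fin (n + 1) → k) :
    vecApp F (c • v) = c ^ F.deg • vecApp F v := by
  ext i; simp [vecApp, homog_eval (F.homog i)]

lemma defined_mk {n m : ℕ} (F : RatMap k n m) (v : Fin (n + 1) → k) (hv : v ≠ 0) :
    F.Defined (Projectivization.mk k v hv) ↔ vecApp F v ≠ 0 := by
  obtain ⟨a, ha⟩ := Projectivization.exists_smul_eq_mk_rep k v hv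
  have h : (Projectivization.mk k v hv).rep = (a : k) • v := ha.symm
  have : F.Defined (Projectivization.mk k v hv) ↔ vecApp F ((a : k) • v) ≠ 0 := by
    rw [← h]; rfl
  rw [this, vecApp_smul]
  simp

lemma app_mk {n m : ℕ} (F : RatMap k n m) (v : Fin (n + 1) → k) (hv : v ≠ 0)
    (hF : vecApp F v ≠ 0) :
    F.app (Projectivization.mk k v hv) = Projectivization.mk k (vecApp F v) hF := by
  have hd : (fun i => eval (Projectivization.mk k v hv).rep (F.comp i)) ≠ 0 :=
    (defined_mk F v hv).2 hF
  obtain ⟨a, ha⟩ := Projectivization.exists_smul_eq_mk_rep k v hv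
  have h : (Projectivization.mk k v hv).rep = (a : k) • v := ha.symm
  have h2 : (fun i => eval (Projectivization.mk k v hv).rep (F.comp i))
      = (a : k) ^ F.deg • vecApp F v := by
    rw [← vecApp_smul, ← h]; rfl
  unfold RatMap.app
  rw [dif_pos hd, Projectivization.mk_eq_mk_iff']
  exact ⟨(a : k) ^ F.deg, h2.symm⟩

/-- a homogeneous binary form vanishing at all but finitely many `(1,t)` is zero. -/
lemma binary_zero [Infinite k] {d : ℕ} {w : MvPolynomial (Fin 2) k} (hw : w.IsHomogeneous d)
    (h : ∀ t : k, eval ![1, t] w = 0) : w = 0 := by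
  have : X 0 * w = 0 := by
    apply MvPolynomial.funext
    intro v
    by_cases h0 : v 0 = 0
    · simp [h0]
    · have hv : v = v 0 • ![1, v 1 / v 0] := by
        ext i; fin_cases i
        · simp
        · simp; field_simp
      have : eval v w = 0 := by
        rw [hv, homog_eval hw, h, mul_zero]
      simp [this]
  simpa using this

end Helpers

open MvPolynomial ProjSp

section Transfer

variable {k : Type} [Field k]

/-- One half of the point-level statement. -/
lemma half_transfer {O κ : Type} [CommRing O] [IsDomain O] [Algebra k O] [Field κ] [Algebra k κ]
    (ρ : O →ₐ[k] κ) (x y : Fin 3 → O)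
    (hxinj : Function.Injective (aeval x : MvPolynomial (Fin 3) k →ₐ[k] O))
    (Q R : MvPolynomial (Fin 3) k) (P G : Fin 3 → MvPolynomial (Fin 3) k) (N : ℕ)
    (hP : ∀ m, aeval x Q * y m = aeval x (P m))
    (hG : ∀ m, aeval y R * x m = aeval y (G m))
    (hQ : ρ (aeval x Q) ≠ 0) (hR : ρ (aeval y R) ≠ 0)
    (hNR : R.totalDegree ≤ N) (hNG : ∀ m, (G m).totalDegree ≤ N) :
    ∃ U : MvPolynomial (Fin 3) k, ρ (aeval x U) ≠ 0 ∧
      ∀ v, eval v U ≠ 0 → eval v Q ≠ 0 ∧ ∃ e : k, e ≠ 0 ∧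
        eval (Fin.cons (eval v Q) (fun m => eval v (P m))) (hmg N R) = e ∧
        ∀ m, eval (Fin.cons (eval v Q) (fun m => eval v (P m))) (hmg N (G m)) = e * v m := by
  set S : Fin 4 → MvPolynomial (Fin 3) k := Fin.cons Q P with hS
  have key : ∀ p : MvPolynomial (Fin 3) k, p.totalDegree ≤ N →
      aeval x (aeval S (hmg N p)) = aeval x Q ^ N * aeval y p := by
    intro p hp
    rw [comp_aeval_apply]
    have := hmg_aeval hp (fun i => aeval x (S i)) y (fun i => by simp [hS, hP])
    simpa [hS] using this
  have ev : ∀ (p : MvPolynomial (Fin 4) k) (v : Fin 3 → k),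
      eval v (aeval S p) = eval (Fin.cons (eval v Q) (fun m => eval v (P m))) p := by
    intro p v
    have : (Fin.cons (eval v Q) (fun m => eval v (P m)) : Fin 4 → k) = fun i => aeval v (S i) := by
      ext i; refine Fin.cases ?_ (fun j => ?_) i <;> simp [hS, aeval_eq_eval]
    rw [this, ← aeval_eq_eval, ← aeval_eq_eval, comp_aeval_apply]
  set R1 := aeval S (hmg N R) with hR1
  have h1 : ρ (aeval x R1) ≠ 0 := by
    rw [hR1, key R hNR, map_mul, map_pow]
    exact mul_ne_zero (pow_ne_zero _ hQ) hR
  have h2 : ∀ m, aeval S (hmg N (G m)) = R1 * X m := by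
    intro m
    apply hxinj
    rw [key _ (hNG m), map_mul, hR1, key R hNR, aeval_X, ← hG]
    ring
  refine ⟨Q * R1, ?_, fun v hv => ?_⟩
  · rw [map_mul, map_mul]; exact mul_ne_zero hQ h1
  · rw [map_mul] at hv
    refine ⟨left_ne_zero_of_mul hv, eval v R1, right_ne_zero_of_mul hv, ?_, fun m => ?_⟩
    · rw [← ev]
    · rw [← ev, h2, map_mul, eval_X]

lemma transfer {O κ : Type} [CommRing O] [IsDomain O] [Algebra k O] [Field κ] [Algebra k κ]
    (ρ : O →ₐ[k] κ) (x y : Fin 3 → O) (f3 : MvPolynomial (Fin 3) k)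
    (h1 : ∀ p : MvPolynomial (Fin 3) k, ρ (aeval x p) = 0 ↔ f3 ∣ p)
    (h2 : ∀ p : MvPolynomial (Fin 3) k, ρ (aeval y p) = 0 ↔ X 0 ∣ p)
    (hxinj : Function.Injective (aeval x : MvPolynomial (Fin 3) k →ₐ[k] O))
    (hloc : ∀ o : O, ∃ p q : MvPolynomial (Fin 3) k, ρ (aeval x q) ≠ 0 ∧ aeval x q * o = aeval x p)
    (hfrac : ∀ o : O, ∃ p q : MvPolynomial (Fin 3) k, aeval y q ≠ 0 ∧ aeval y q * o = aeval y p)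
    (hy0 : y 0 ≠ 0) :
    ∃ (Q R : MvPolynomial (Fin 3) k) (P G : Fin 3 → MvPolynomial (Fin 3) k) (N : ℕ)
      (U V : MvPolynomial (Fin 3) k),
      Q.totalDegree ≤ N ∧ R.totalDegree ≤ N ∧ (∀ m, (P m).totalDegree ≤ N) ∧
      (∀ m, (G m).totalDegree ≤ N) ∧ ¬ f3 ∣ U ∧ ¬ X 0 ∣ V ∧
      (∀ v, eval v U ≠ 0 → eval v Q ≠ 0 ∧ ∃ e : k, e ≠ 0 ∧
        eval (Fin.cons (eval v Q) (fun m => eval v (P m))) (hmg N R) = e ∧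
        ∀ m, eval (Fin.cons (eval v Q) (fun m => eval v (P m))) (hmg N (G m)) = e * v m) ∧
      (∀ v, eval v V ≠ 0 → eval v R ≠ 0 ∧ ∃ e : k, e ≠ 0 ∧
        eval (Fin.cons (eval v R) (fun m => eval v (G m))) (hmg N Q) = e ∧
        ∀ m, eval (Fin.cons (eval v R) (fun m => eval v (G m))) (hmg N (P m)) = e * v m) ∧
      (∀ v, eval v f3 = 0 → eval v (P 0) = 0) ∧
      (∀ v, v 0 = 0 → eval v R ≠ 0 → eval (fun m => eval v (G m) / eval v R) f3 = 0) := by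
  have hX0 : Prime (X 0 : MvPolynomial (Fin 3) k) := X_prime
  -- descent
  have hsplit : ∀ q : MvPolynomial (Fin 3) k, q ≠ 0 → ∃ n q', q = X 0 ^ n * q' ∧ ¬ X 0 ∣ q' := by
    intro q hq
    obtain ⟨n, q', h, h'⟩ := WfDvdMonoid.max_power_factor hq hX0.irreducible
    exact ⟨n, q', h', h⟩
  have hyinj : Function.Injective (aeval y : MvPolynomial (Fin 3) k →ₐ[k] O) := by
    rw [injective_iff_map_eq_zero]
    intro q hq
    by_contra hq0
    obtain ⟨n, q', rfl, hq'⟩ := hsplit q hq0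
    rw [map_mul, map_pow, aeval_X] at hq
    have : aeval y q' = 0 := (mul_eq_zero.1 hq).resolve_left (pow_ne_zero _ hy0)
    exact hq' ((h2 q').1 (by rw [this, map_zero]))
  have hloc' : ∀ o : O, ∃ p q : MvPolynomial (Fin 3) k,
      ρ (aeval y q) ≠ 0 ∧ aeval y q * o = aeval y p := by
    intro o
    obtain ⟨p, q, hq, hpq⟩ := hfrac o
    obtain ⟨n, q', rfl, hq'⟩ := hsplit q (by rintro rfl; simp at hq)
    clear hq
    induction n generalizing p with
    | zero => exact ⟨p, q', by rwa [Ne, h2], by simpa using hpq⟩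
    | succ n ih =>
      have : ρ (aeval y p) = 0 := by
        rw [← hpq]
        have := (h2 (X 0)).2 dvd_rfl
        simp only [map_mul, map_pow, pow_succ, this]; simp
      obtain ⟨p', rfl⟩ := (h2 p).1 this
      refine ih p' ?_
      apply mul_left_cancel₀ hy0
      simp only [map_mul, map_pow, aeval_X] at hpq ⊢
      rw [← hpq]; ring
  -- common denominators
  have hcommon : ∀ (a b : Fin 3 → O), (∀ o : O, ∃ p q : MvPolynomial (Fin 3) k,
      ρ (aeval a q) ≠ 0 ∧ aeval a q * o = aeval a p) →
      ∃ (Q : MvPolynomial (Fin 3) k) (P : Fin 3 → MvPolynomial (Fin 3) k),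
        ρ (aeval a Q) ≠ 0 ∧ ∀ m, aeval a Q * b m = aeval a (P m) := by
    intro a b h
    choose p q hq hpq using fun m => h (b m)
    refine ⟨∏ m, q m, fun m => (∏ m' ∈ Finset.univ.erase m, q m') * p m, ?_, fun m => ?_⟩
    · rw [map_prod, map_prod]; exact Finset.prod_ne_zero_iff.2 fun m _ => hq m
    · rw [← Finset.prod_erase_mul _ _ (Finset.mem_univ m), map_mul, map_mul, mul_assoc, hpq]
  obtain ⟨Q, P, hQ, hP⟩ := hcommon x y hloc
  obtain ⟨R, G, hR, hG⟩ := hcommon y x hloc'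
  set N := Q.totalDegree + R.totalDegree + ∑ m, (P m).totalDegree + ∑ m, (G m).totalDegree +
    f3.totalDegree with hN
  have hPs : ∀ m, (P m).totalDegree ≤ ∑ m, (P m).totalDegree := fun m =>
    Finset.single_le_sum (f := fun m => (P m).totalDegree) (fun _ _ => Nat.zero_le _)
      (Finset.mem_univ m)
  have hGs : ∀ m, (G m).totalDegree ≤ ∑ m, (G m).totalDegree := fun m =>
    Finset.single_le_sum (f := fun m => (G m).totalDegree) (fun _ _ => Nat.zero_le _)
      (Finset.mem_univ m)
  have hNQ : Q.totalDegree ≤ N := by omega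
  have hNR : R.totalDegree ≤ N := by omega
  have hNP : ∀ m, (P m).totalDegree ≤ N := fun m => by have := hPs m; omega
  have hNG : ∀ m, (G m).totalDegree ≤ N := fun m => by have := hGs m; omega
  have hNf : f3.totalDegree ≤ N := by omega
  obtain ⟨U, hU, hU'⟩ := half_transfer ρ x y hxinj Q R P G N hP hG hQ hR hNR hNG
  obtain ⟨V, hV, hV'⟩ := half_transfer ρ y x hyinj R Q G P N hG hP hR hQ hNQ hNP
  refine ⟨Q, R, P, G, N, U, V, hNQ, hNR, hNP, hNG, by rwa [← h1], by rwa [← h2], hU', hV', ?_, ?_⟩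
  · intro v hv
    have : ρ (aeval x (P 0)) = 0 := by
      have := (h2 (X 0)).2 dvd_rfl
      rw [aeval_X] at this
      rw [← hP, map_mul, this, mul_zero]
    obtain ⟨c, hc⟩ := (h1 _).1 this
    rw [hc, map_mul, hv, zero_mul]
  · intro v hv0 hRv
    set S : Fin 4 → MvPolynomial (Fin 3) k := Fin.cons R G with hS
    have key : aeval y (aeval S (hmg N f3)) = aeval y R ^ N * aeval x f3 := by
      rw [comp_aeval_apply]
      have := hmg_aeval hNf (fun i => aeval y (S i)) x (fun i => by simp [hS, hG])
      simpa [hS] using this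
    have : ρ (aeval y (aeval S (hmg N f3))) = 0 := by
      rw [key, map_mul, (h1 f3).2 dvd_rfl, mul_zero]
    obtain ⟨c, hc⟩ := (h2 _).1 this
    have h3 : eval v (aeval S (hmg N f3)) = 0 := by rw [hc, map_mul, eval_X, hv0, zero_mul]
    rw [← aeval_eq_eval, comp_aeval_apply] at h3
    have h4 := hmg_aeval hNf (fun i => aeval v (S i)) (fun m => eval v (G m) / eval v R)
      (fun i => by simp [hS, aeval_eq_eval]; field_simp)
    rw [h3] at h4
    have h5 := (mul_eq_zero.1 h4.symm).resolve_left
      (pow_ne_zero _ (by simpa [hS, aeval_eq_eval] using hRv))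
    simpa [aeval_eq_eval] using h5

end Transfer

open MvPolynomial ProjSp

section Core

variable {k : Type} [Field k]

lemma finSucc_aeval {n : ℕ} {κ₀ κ : Type} [Field κ₀] [Field κ] [Algebra k κ₀] [Algebra k κ]
    [Algebra κ₀ κ] [IsScalarTower k κ₀ κ] (Z : κ) (v : Fin n → κ₀)
    (p : MvPolynomial (Fin (n + 1)) k) :
    aeval (Fin.cons Z (fun i => algebraMap κ₀ κ (v i)) : Fin (n + 1) → κ) p =
      Polynomial.aeval Z ((finSuccEquiv k n p).map (aeval v : _ →ₐ[k] κ₀).toRingHom) := by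
  induction p using MvPolynomial.induction_on with
  | C a =>
    simp only [aeval_C, finSuccEquiv_apply, eval₂Hom_C, RingHom.comp_apply, Polynomial.map_C,
      Polynomial.aeval_C, AlgHom.toRingHom_eq_coe, RingHom.coe_coe]
    rw [← IsScalarTower.algebraMap_apply]
  | add p q hp hq => simp only [map_add, hp, hq, Polynomial.map_add]
  | mul_X p i hp =>
    simp only [map_mul, hp, Polynomial.map_mul, aeval_X]
    congr 1
    refine Fin.cases ?_ (fun j => ?_) i
    · simp [finSuccEquiv_X_zero]
    · simp [finSuccEquiv_X_succ]

lemma finSucc_aeval_eq_zero {n : ℕ} {κ₀ κ : Type} [Field κ₀] [Field κ] [Algebra k κ₀] [Algebra k κ]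
    [Algebra κ₀ κ] [IsScalarTower k κ₀ κ] {Z : κ} (hZ : Transcendental κ₀ Z) (v : Fin n → κ₀)
    (p : MvPolynomial (Fin (n + 1)) k) :
    aeval (Fin.cons Z (fun i => algebraMap κ₀ κ (v i)) : Fin (n + 1) → κ) p = 0 ↔
      ∀ i, aeval v ((finSuccEquiv k n p).coeff i) = 0 := by
  rw [finSucc_aeval]
  constructor
  · intro h i
    have h0 := (transcendental_iff.1 hZ) _ h
    have := congrArg (fun q => Polynomial.coeff q i) h0
    simpa using this
  · intro h
    have : (finSuccEquiv k n p).map (aeval v : _ →ₐ[k] κ₀).toRingHom = 0 := by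
      ext i; simpa using h i
    rw [this, map_zero]

lemma finSucc_rename {n : ℕ} (f : MvPolynomial (Fin n) k) :
    finSuccEquiv k n (rename Fin.succ f) = Polynomial.C f := by
  induction f using MvPolynomial.induction_on with
  | C a => simp [finSuccEquiv_apply]
  | add p q hp hq => simp only [map_add, hp, hq]
  | mul_X p i hp => simp only [map_mul, hp, rename_X, finSuccEquiv_X_succ]

lemma zero_cons_aeval {n : ℕ} {κ : Type} [Field κ] [Algebra k κ] (v : Fin n → κ)
    (p : MvPolynomial (Fin (n + 1)) k) :
    aeval (Fin.cons 0 v : Fin (n + 1) → κ) p = aeval v ((finSuccEquiv k n p).coeff 0) := by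
  induction p using MvPolynomial.induction_on with
  | C a => simp [finSuccEquiv_apply]
  | add p q hp hq => simp only [map_add, hp, hq, Polynomial.coeff_add]
  | mul_X p i hp =>
    simp only [map_mul, hp, aeval_X, Polynomial.mul_coeff_zero]
    congr 1
    refine Fin.cases ?_ (fun j => ?_) i
    · simp [finSuccEquiv_X_zero]
    · simp [finSuccEquiv_X_succ]

lemma exists_loc {κ : Type} [Field κ] [Algebra k κ] (ρA : MvPolynomial (Fin 3) k →ₐ[k] κ) :
    ∃ (O : Type) (_ : CommRing O) (_ : IsDomain O) (_ : Algebra k O)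
      (ι : MvPolynomial (Fin 3) k →ₐ[k] O) (ρ : O →ₐ[k] κ), Function.Injective ι ∧
      (∀ p, ρ (ι p) = ρA p) ∧ (∀ o, ρ o ≠ 0 → IsUnit o) ∧
      ∀ o, ∃ p q, ρA q ≠ 0 ∧ ι q * o = ι p := by
  let 𝔭 := RingHom.ker ρA.toRingHom
  have hp : 𝔭.IsPrime := RingHom.ker_isPrime _
  have hmem : ∀ q, q ∈ 𝔭.primeCompl ↔ ρA q ≠ 0 := fun q => by
    change ¬ (q ∈ 𝔭) ↔ _
    simp [𝔭, RingHom.mem_ker]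
  let O := Localization.AtPrime 𝔭
  have hle : 𝔭.primeCompl ≤ nonZeroDivisors _ := 𝔭.primeCompl_le_nonZeroDivisors
  have hu : ∀ y : 𝔭.primeCompl, IsUnit (ρA y) := fun y => ((hmem _).1 y.2).isUnit
  let ρ : O →ₐ[k] κ := IsLocalization.liftAlgHom (M := 𝔭.primeCompl) (f := ρA) hu
  let ι : MvPolynomial (Fin 3) k →ₐ[k] O := IsScalarTower.toAlgHom k _ O
  have hρ : ∀ p, ρ (ι p) = ρA p := fun p => IsLocalization.lift_eq (M := 𝔭.primeCompl) hu p
  have hfr : ∀ o, ∃ p q, ρA q ≠ 0 ∧ ι q * o = ι p := by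
    intro o
    obtain ⟨⟨p, q⟩, h⟩ := IsLocalization.surj 𝔭.primeCompl o
    exact ⟨p, q, (hmem _).1 q.2, by rw [mul_comm]; exact h⟩
  refine ⟨O, inferInstance, IsLocalization.isDomain_localization hle, inferInstance, ι, ρ,
    IsLocalization.injective O hle, hρ, ?_, hfr⟩
  intro o ho
  obtain ⟨p, q, hq, h⟩ := hfr o
  have h2 : ρA p ≠ 0 := by
    rw [← hρ, ← h, map_mul, hρ]; exact mul_ne_zero hq ho
  have h3 : IsUnit (ι p) := IsLocalization.map_units O (⟨p, (hmem p).2 h2⟩ : 𝔭.primeCompl)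
  rw [← h] at h3
  exact isUnit_of_mul_isUnit_right h3

/-- Difference of values of a polynomial. -/
lemma sub_mem_pair {B : Type} [CommRing B] [Algebra k B] (v v' : Fin 2 → B)
    (p : MvPolynomial (Fin 2) k) :
    ∃ α β, aeval v p - aeval v' p = α * (v 0 - v' 0) + β * (v 1 - v' 1) := by
  have : aeval v p - aeval v' p ∈ Ideal.span {v 0 - v' 0, v 1 - v' 1} := by
    rw [← Ideal.Quotient.mk_eq_mk_iff_sub_mem]
    have h : ∀ u : Fin 2 → B, Ideal.Quotient.mk (Ideal.span {v 0 - v' 0, v 1 - v' 1}) (aeval u p)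
        = aeval (fun i => Ideal.Quotient.mkₐ k (Ideal.span {v 0 - v' 0, v 1 - v' 1}) (u i)) p := by
      intro u
      have := comp_aeval_apply u (Ideal.Quotient.mkₐ k (Ideal.span {v 0 - v' 0, v 1 - v' 1})) p
      simpa using this
    rw [h, h]
    congr 2
    funext i
    simp only [Ideal.Quotient.mkₐ_eq_mk]
    rw [Ideal.Quotient.mk_eq_mk_iff_sub_mem]
    fin_cases i
    · exact Ideal.subset_span (by simp)
    · exact Ideal.subset_span (by simp)
  obtain ⟨α, β, h⟩ := Ideal.mem_span_pair.1 this
  exact ⟨α, β, h.symm⟩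

end Core

open MvPolynomial ProjSp

section Core2

variable {k : Type} [Field k]

lemma sub_mem_pair_sub {O : Type} [CommRing O] [Algebra k O] (B : Subalgebra k O)
    (v v' : Fin 2 → O) (hv : ∀ i, v i ∈ B) (hv' : ∀ i, v' i ∈ B) (p : MvPolynomial (Fin 2) k) :
    ∃ α ∈ B, ∃ β ∈ B, aeval v p - aeval v' p = α * (v 0 - v' 0) + β * (v 1 - v' 1) := by
  obtain ⟨α, β, h⟩ := sub_mem_pair (B := B) (fun i => ⟨v i, hv i⟩) (fun i => ⟨v' i, hv' i⟩) p
  refine ⟨α, α.2, β, β.2, ?_⟩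
  have := congrArg B.val h
  rw [map_sub, comp_aeval_apply, comp_aeval_apply] at this
  simpa using this

lemma core_field {κ₀ κ : Type} [Field κ₀] [Field κ] [Algebra κ₀ κ] {Z : κ}
    (hZ : Transcendental κ₀ Z) (a b c d s : κ₀) (X1 Y1 : κ) (hs : s ≠ 0)
    (h1 : 1 = algebraMap κ₀ κ a * X1 + algebraMap κ₀ κ b * Y1)
    (h2 : -algebraMap κ₀ κ s * Z = algebraMap κ₀ κ c * X1 + algebraMap κ₀ κ d * Y1) :
    Y1 ≠ 0 ∧ Transcendental κ₀ (X1 / Y1) := by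
  have hs' : algebraMap κ₀ κ s ≠ 0 := by simpa using hs
  have halg : ∀ e : κ₀, IsAlgebraic κ₀ (algebraMap κ₀ κ e) := fun e => isAlgebraic_algebraMap e
  have hY : Y1 ≠ 0 := by
    intro h0
    subst h0
    simp only [mul_zero, add_zero] at h1 h2
    have ha : algebraMap κ₀ κ a ≠ 0 := by
      intro h; rw [h] at h1; simp at h1
    apply hZ
    have : Z = -(algebraMap κ₀ κ c * (algebraMap κ₀ κ a)⁻¹ * (algebraMap κ₀ κ s)⁻¹) := by
      have hX : X1 = (algebraMap κ₀ κ a)⁻¹ := by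
        field_simp; rw [mul_comm]; exact h1.symm
      rw [← hX]; field_simp; linear_combination -h2
    rw [this]
    exact (((halg c).mul (halg a).inv).mul (halg s).inv).neg
  refine ⟨hY, fun hX => hZ ?_⟩
  set ξ := X1 / Y1 with hξ
  have hX1 : X1 = ξ * Y1 := by rw [hξ]; field_simp
  have e1 : (algebraMap κ₀ κ a * ξ + algebraMap κ₀ κ b) * Y1 = 1 := by
    rw [h1, hX1]; ring
  have hn : algebraMap κ₀ κ a * ξ + algebraMap κ₀ κ b ≠ 0 := by
    intro h; rw [h] at e1; simp at e1
  have : Z = -((algebraMap κ₀ κ c * ξ + algebraMap κ₀ κ d) *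
      (algebraMap κ₀ κ s)⁻¹ * (algebraMap κ₀ κ a * ξ + algebraMap κ₀ κ b)⁻¹) := by
    have hY1 : Y1 = (algebraMap κ₀ κ a * ξ + algebraMap κ₀ κ b)⁻¹ := by
      exact eq_inv_of_mul_eq_one_right e1
    have h3 : (algebraMap κ₀ κ c * ξ + algebraMap κ₀ κ d) *
      (algebraMap κ₀ κ s)⁻¹ * (algebraMap κ₀ κ a * ξ + algebraMap κ₀ κ b)⁻¹ =
      (algebraMap κ₀ κ s)⁻¹ * (-algebraMap κ₀ κ s * Z) := by
      rw [h2, ← hY1, hX1]; ring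
    rw [h3]; field_simp; try ring
  rw [this]
  exact ((((halg c).mul hX).add (halg d)).mul (halg s).inv |>.mul
    (((halg a).mul hX).add (halg b)).inv).neg

lemma X0_dvd_iff {n : ℕ} (p : MvPolynomial (Fin (n + 1)) k) :
    X 0 ∣ p ↔ (finSuccEquiv k n p).coeff 0 = 0 := by
  rw [← Polynomial.X_dvd_iff, ← finSuccEquiv_X_zero (R := k), map_dvd_iff]

lemma rename_succ_dvd_iff {n : ℕ} (f : MvPolynomial (Fin n) k)
    (p : MvPolynomial (Fin (n + 1)) k) :
    rename Fin.succ f ∣ p ↔ ∀ i, f ∣ (finSuccEquiv k n p).coeff i := by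
  rw [← Polynomial.C_dvd_iff_dvd_coeff, ← finSucc_rename, map_dvd_iff]

lemma y_ker {κ₀ κ : Type} [Field κ₀] [Field κ] [Algebra k κ₀] [Algebra k κ]
    [Algebra κ₀ κ] [IsScalarTower k κ₀ κ] {t : κ₀} {ξ : κ} (ht : Transcendental k t)
    (hξ : Transcendental κ₀ ξ) (p : MvPolynomial (Fin 3) k) :
    aeval (![0, ξ, algebraMap κ₀ κ t] : Fin 3 → κ) p = 0 ↔ X 0 ∣ p := by
  have e : (![0, ξ, algebraMap κ₀ κ t] : Fin 3 → κ) =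
      Fin.cons 0 (Fin.cons ξ (fun i : Fin 1 => algebraMap κ₀ κ ((fun _ => t) i))) := by
    ext i; fin_cases i <;> rfl
  rw [e, zero_cons_aeval, finSucc_aeval_eq_zero hξ, X0_dvd_iff]
  have hinj : Function.Injective (aeval (fun _ : Fin 1 => t) : MvPolynomial (Fin 1) k →ₐ[k] κ₀) := by
    have : AlgebraicIndependent k (fun _ : Fin 1 => t) := by
      rw [algebraicIndependent_unique_type_iff]; exact ht
    exact this
  constructor
  · intro h
    apply (finSuccEquiv k 1).injective
    ext1 i
    simp only [map_zero, Polynomial.coeff_zero]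
    exact hinj (by rw [h i, map_zero])
  · intro h i
    rw [h]; simp

lemma exists_eta {κ₀ κ O : Type} [Field κ₀] [Field κ] [CommRing O] [Algebra k κ₀] [Algebra k κ]
    [Algebra κ₀ κ] [IsScalarTower k κ₀ κ] [Algebra k O]
    [Algebra (Polynomial k) κ₀] [IsFractionRing (Polynomial k) κ₀]
    [IsScalarTower k (Polynomial k) κ₀] (ρ : O →ₐ[k] κ)
    (hu : ∀ o, ρ o ≠ 0 → IsUnit o) (w : O)
    (hw : ρ w = algebraMap κ₀ κ (algebraMap (Polynomial k) κ₀ Polynomial.X)) :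
    ∃ η : κ₀ →ₐ[k] O, (∀ e, ρ (η e) = algebraMap κ₀ κ e) ∧
      ∀ q : Polynomial k, η (algebraMap _ κ₀ q) = Polynomial.aeval w q := by
  have hq : ∀ q : Polynomial k, ρ (Polynomial.aeval w q) = algebraMap κ₀ κ (algebraMap _ κ₀ q) := by
    intro q
    have h1 : (ρ.comp (Polynomial.aeval w)) =
        (IsScalarTower.toAlgHom k κ₀ κ).comp (IsScalarTower.toAlgHom k (Polynomial k) κ₀) := by
      ext; simp [hw]
    exact DFunLike.congr_fun h1 q
  have hun : ∀ y : nonZeroDivisors (Polynomial k), IsUnit (Polynomial.aeval w (y : Polynomial k)) := by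
    intro y
    apply hu
    rw [hq]
    have := nonZeroDivisors.ne_zero y.2
    simpa using this
  let η : κ₀ →ₐ[k] O := IsLocalization.liftAlgHom (M := nonZeroDivisors (Polynomial k))
    (f := Polynomial.aeval w) hun
  have hη : ∀ q : Polynomial k, η (algebraMap _ κ₀ q) = Polynomial.aeval w q := fun q =>
    IsLocalization.lift_eq (M := nonZeroDivisors (Polynomial k)) hun q
  refine ⟨η, fun e => ?_, hη⟩
  obtain ⟨a, b, hb, rfl⟩ := IsFractionRing.div_surjective (A := Polynomial k) e
  have hb0 : algebraMap _ κ₀ b ≠ 0 := by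
    have := nonZeroDivisors.ne_zero hb
    simpa using this
  have h : ρ (η (algebraMap _ κ₀ a / algebraMap _ κ₀ b)) * ρ (η (algebraMap _ κ₀ b)) =
      ρ (η (algebraMap _ κ₀ a)) := by
    rw [← map_mul, ← map_mul, div_mul_cancel₀ _ hb0]
  rw [hη, hη, hq, hq] at h
  have hb1 : algebraMap κ₀ κ (algebraMap _ κ₀ b) ≠ 0 := by simpa using hb0
  rw [map_div₀ (algebraMap κ₀ κ), eq_div_iff hb1]; exact h

end Core2

open MvPolynomial ProjSp

section Core3

variable {k : Type} [Field k]

lemma aeval_mem_sub {O σ : Type} [CommRing O] [Algebra k O] (A : Subalgebra k O) (v : σ → O)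
    (hv : ∀ i, v i ∈ A) (p : MvPolynomial σ k) : aeval v p ∈ A := by
  have h : Algebra.adjoin k (Set.range v) ≤ A := by
    rw [Algebra.adjoin_le_iff]; rintro _ ⟨i, rfl⟩; exact hv i
  apply h
  rw [Algebra.adjoin_range_eq_range_aeval]
  exact ⟨p, rfl⟩

/-- Fractions of `y`. -/
lemma frac_of_closed {O : Type} [CommRing O] [IsDomain O] [Algebra k O] (y : Fin 3 → O)
    (h : ∀ A : Subalgebra k O, (∀ i, y i ∈ A) → (∀ a b o, a ∈ A → b ∈ A → b ≠ 0 → b * o = a → o ∈ A) →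
      ∀ o, o ∈ A) (o : O) :
    ∃ p q : MvPolynomial (Fin 3) k, aeval y q ≠ 0 ∧ aeval y q * o = aeval y p := by
  let L := FractionRing O
  let j : O →ₐ[k] L := IsScalarTower.toAlgHom k O L
  have hj : Function.Injective j := IsFractionRing.injective O L
  let K := IntermediateField.adjoin k (Set.range (fun i => j (y i)))
  have := h (K.toSubalgebra.comap j)
    (fun i => IntermediateField.subset_adjoin k _ ⟨i, rfl⟩) (by
      intro a b o ha hb hb0 hbo
      change j o ∈ K
      have hb1 : j b ≠ 0 := by rw [ne_eq, map_eq_zero_iff _ hj]; exact hb0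
      have : j o = j a / j b := by
        rw [eq_div_iff hb1, ← map_mul, ← hbo, mul_comm]
      rw [this]
      exact K.div_mem ha hb) o
  change j o ∈ K at this
  rw [IntermediateField.mem_adjoin_range_iff] at this
  obtain ⟨r, s, hrs⟩ := this
  rw [← comp_aeval_apply, ← comp_aeval_apply] at hrs
  by_cases hs : aeval y s = 0
  · refine ⟨0, 1, by simp, ?_⟩
    rw [hs, map_zero, div_zero, map_eq_zero_iff _ hj] at hrs
    simp [hrs]
  · refine ⟨r, s, hs, hj ?_⟩
    have hb1 : j (aeval y s) ≠ 0 := by rw [ne_eq, map_eq_zero_iff _ hj]; exact hs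
    rw [map_mul, hrs, mul_div_cancel₀ _ hb1]

theorem core {κ₀ κ : Type} [Field κ₀] [Field κ] [Algebra k κ₀] [Algebra k κ]
    [Algebra κ₀ κ] [IsScalarTower k κ₀ κ]
    [Algebra (Polynomial k) κ₀] [IsFractionRing (Polynomial k) κ₀]
    [IsScalarTower k (Polynomial k) κ₀] {Z : κ} (hZ : Transcendental κ₀ Z)
    (f R1 R2 : MvPolynomial (Fin 2) k) (ab : Fin 2 → κ₀) (hf : f ≠ 0)
    (hker : ∀ p, aeval ab p = 0 ↔ f ∣ p) (hR2 : aeval ab R2 ≠ 0)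
    (hR1 : aeval ab R1 = algebraMap (Polynomial k) κ₀ Polynomial.X * aeval ab R2) :
    ∃ (O : Type) (_ : CommRing O) (_ : IsDomain O) (_ : Algebra k O) (ρ : O →ₐ[k] κ)
      (x y : Fin 3 → O),
    (∀ p : MvPolynomial (Fin 3) k, ρ (aeval x p) = 0 ↔ rename Fin.succ f ∣ p) ∧
    (∀ p : MvPolynomial (Fin 3) k, ρ (aeval y p) = 0 ↔ X 0 ∣ p) ∧
    (Function.Injective (aeval x : MvPolynomial (Fin 3) k →ₐ[k] O)) ∧
    (∀ o : O, ∃ p q : MvPolynomial (Fin 3) k, ρ (aeval x q) ≠ 0 ∧ aeval x q * o = aeval x p) ∧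
    (∀ o : O, ∃ p q : MvPolynomial (Fin 3) k, aeval y q ≠ 0 ∧ aeval y q * o = aeval y p) ∧
    y 0 ≠ 0 := by
  set t := algebraMap (Polynomial k) κ₀ Polynomial.X with ht
  have htr : Transcendental k t := by
    have h0 : Transcendental k (Polynomial.X : Polynomial k) := Polynomial.transcendental_X k
    rw [ht]
    exact (transcendental_algebraMap_iff (IsFractionRing.injective (Polynomial k) κ₀)).2 h0
  let ρA : MvPolynomial (Fin 3) k →ₐ[k] κ :=
    aeval (Fin.cons Z (fun i => algebraMap κ₀ κ (ab i)) : Fin 3 → κ)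
  have hkerA : ∀ p, ρA p = 0 ↔ rename Fin.succ f ∣ p := by
    intro p
    rw [finSucc_aeval_eq_zero hZ, rename_succ_dvd_iff]
    simp only [hker]
  obtain ⟨O, _, _, _, ι, ρ, hιinj, hρι, hunit, hfr⟩ := exists_loc ρA
  set x : Fin 3 → O := fun m => ι (X m) with hx
  have hιx : ∀ p, aeval x p = ι p := by
    intro p
    rw [hx, ← comp_aeval_apply, aeval_X_left_apply]
  set z := x 0 with hz
  set xy : Fin 2 → O := fun i => x i.succ with hxy
  have hxyι : ∀ g : MvPolynomial (Fin 2) k, aeval xy g = ι (rename Fin.succ g) := by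
    intro g
    rw [← hιx, aeval_rename]; rfl
  have hρz : ρ z = Z := by rw [hz, hx]; simp [hρι, ρA]
  have hρxy : ∀ i, ρ (xy i) = algebraMap κ₀ κ (ab i) := by
    intro i; rw [hxy, hx]; simp [hρι, ρA]
  have hemb : Function.Injective (algebraMap κ₀ κ) := (algebraMap κ₀ κ).injective
  have hρg : ∀ g : MvPolynomial (Fin 2) k, ρ (aeval xy g) = algebraMap κ₀ κ (aeval ab g) := by
    intro g
    rw [comp_aeval_apply]
    simp only [hρxy]
    exact (comp_aeval_apply ab (IsScalarTower.toAlgHom k κ₀ κ) g).symm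
  set fO := aeval xy f with hfO
  have hfO0 : fO ≠ 0 := by
    rw [hfO, hxyι, ne_eq, map_eq_zero_iff _ hιinj,
      map_eq_zero_iff _ (rename_injective _ (Fin.succ_injective 2))]
    exact hf
  have hρf : ρ fO = 0 := by rw [hfO, hρg, (hker f).2 dvd_rfl, map_zero]
  set r1 := aeval xy R1 with hr1
  set r2 := aeval xy R2 with hr2
  have hρr2 : ρ r2 ≠ 0 := by
    rw [hr2, hρg]; exact (map_ne_zero _).2 hR2
  obtain ⟨r2', hr2'⟩ := (hunit r2 hρr2).exists_right_inv
  set w := z * fO + r1 * r2' with hw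
  have hwr : w * r2 = z * fO * r2 + r1 := by
    rw [hw]; linear_combination r1 * hr2'
  have hρw : ρ w = algebraMap κ₀ κ t := by
    have h1 := congrArg ρ hwr
    simp only [map_add, map_mul, hρf, mul_zero, zero_mul, zero_add] at h1
    have h2 : ρ r1 = algebraMap κ₀ κ t * ρ r2 := by
      rw [hr1, hr2, hρg, hρg, hR1, map_mul]
    rw [h2] at h1
    exact mul_right_cancel₀ hρr2 h1
  obtain ⟨η, hρη, hηq⟩ := exists_eta ρ hunit w hρw
  have hηt : η t = w := by rw [ht, hηq, Polynomial.aeval_X]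
  set a : Fin 2 → O := fun i => η (ab i) with ha
  have hηg : ∀ g : MvPolynomial (Fin 2) k, aeval a g = η (aeval ab g) := by
    intro g; rw [ha, comp_aeval_apply]
  have hdiv : ∀ o, ρ o = 0 → ∃ o', o = fO * o' := by
    intro o ho
    obtain ⟨p, q, hq, h⟩ := hfr o
    have hp : ρA p = 0 := by rw [← hρι, ← h, map_mul, ho, mul_zero]
    obtain ⟨p', rfl⟩ := (hkerA p).1 hp
    obtain ⟨q', hq'⟩ := (hunit (ι q) (by rw [hρι]; exact hq)).exists_right_inv
    refine ⟨ι p' * q', ?_⟩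
    rw [map_mul, ← hxyι] at h
    linear_combination q' * h - o * hq'
  obtain ⟨X1, hX1⟩ := hdiv (xy 0 - a 0) (by rw [map_sub, hρxy, ha]; simp [hρη])
  obtain ⟨Y1, hY1⟩ := hdiv (xy 1 - a 1) (by rw [map_sub, hρxy, ha]; simp [hρη])
  let B : Subalgebra k O := (IsScalarTower.toAlgHom k κ₀ κ).range.comap ρ
  have hB : ∀ o, o ∈ B ↔ ∃ e, algebraMap κ₀ κ e = ρ o := fun o => Iff.rfl
  have hxyB : ∀ i, xy i ∈ B := fun i => (hB _).2 ⟨_, (hρxy i).symm⟩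
  have haB : ∀ i, a i ∈ B := fun i => (hB _).2 ⟨_, (hρη _).symm⟩
  have hηB : ∀ e, η e ∈ B := fun e => (hB _).2 ⟨_, (hρη _).symm⟩
  obtain ⟨α, hα, β, hβ, hαβ⟩ := sub_mem_pair_sub B xy a hxyB haB f
  obtain ⟨γ1, hγ1, δ1, hδ1, hγδ1⟩ := sub_mem_pair_sub B xy a hxyB haB R1
  obtain ⟨γ2, hγ2, δ2, hδ2, hγδ2⟩ := sub_mem_pair_sub B xy a hxyB haB R2
  rw [hηg, (hker f).2 dvd_rfl, map_zero, sub_zero, hX1, hY1, ← hfO] at hαβ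
  rw [hηg, hR1, map_mul, hηt, hX1, hY1, ← hr1] at hγδ1
  rw [hηg, hX1, hY1, ← hr2] at hγδ2
  set s2 := η (aeval ab R2) with hs2
  have e1 : 1 = α * X1 + β * Y1 := by
    apply mul_left_cancel₀ hfO0
    linear_combination hαβ
  have e2 : -(s2 * r2) * z = (γ1 * s2 - w * s2 * γ2) * X1 + (δ1 * s2 - w * s2 * δ2) * Y1 := by
    apply mul_left_cancel₀ hfO0
    linear_combination s2 * hγδ1 - w * s2 * hγδ2 + s2 * hwr
  have hwB : w ∈ B := by rw [← hηt]; exact hηB _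
  have hs2B : s2 ∈ B := hηB _
  obtain ⟨α', hα'⟩ := (hB _).1 hα
  obtain ⟨β', hβ'⟩ := (hB _).1 hβ
  obtain ⟨γ', hγ'⟩ := (hB _).1 (B.sub_mem (B.mul_mem hγ1 hs2B) (B.mul_mem (B.mul_mem hwB hs2B) hγ2))
  obtain ⟨δ', hδ'⟩ := (hB _).1 (B.sub_mem (B.mul_mem hδ1 hs2B) (B.mul_mem (B.mul_mem hwB hs2B) hδ2))
  obtain ⟨hY1ρ, hξtr⟩ := core_field hZ α' β' γ' δ' (aeval ab R2 * aeval ab R2) (ρ X1) (ρ Y1)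
    (mul_ne_zero hR2 hR2) (by rw [hα', hβ', ← map_mul, ← map_mul, ← map_add, ← e1, map_one])
    (by
      rw [hγ', hδ', ← map_mul ρ, ← map_mul ρ, ← map_add ρ, ← e2, map_mul ρ, map_neg, map_mul ρ, hρz,
        hs2, hρη, hr2, hρg, map_mul])
  obtain ⟨Y1', hY1'⟩ := (hunit Y1 hY1ρ).exists_right_inv
  set ξ := X1 * Y1' with hξ
  have hρξ : ρ ξ = ρ X1 / ρ Y1 := by
    rw [eq_div_iff hY1ρ, ← map_mul, hξ]
    congr 1
    linear_combination X1 * hY1'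
  set Y := xy 1 - a 1 with hY
  have hY0 : Y ≠ 0 := by
    rw [hY1]
    refine mul_ne_zero hfO0 ?_
    rintro rfl
    simp at hY1'
  have hXξ : xy 0 - a 0 = ξ * Y := by
    rw [hX1, hY1, hξ]; linear_combination (-fO * X1) * hY1'
  have hρY : ρ Y = 0 := by rw [hY1, map_mul, hρf, zero_mul]
  refine ⟨O, inferInstance, inferInstance, inferInstance, ρ, x, ![Y, ξ, w], ?_, ?_, ?_, ?_, ?_, ?_⟩
  · intro p; rw [hιx, hρι, hkerA]
  · intro p
    rw [comp_aeval_apply, ← y_ker htr hξtr p]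
    have : (fun i => ρ ((![Y, ξ, w] : Fin 3 → O) i)) = ![0, ρ X1 / ρ Y1, algebraMap κ₀ κ t] := by
      ext i; fin_cases i
      · simpa using hρY
      · simpa using hρξ
      · simpa using hρw
    rw [this]
  · intro p q hpq
    rw [hιx, hιx] at hpq
    exact hιinj hpq
  · intro o
    obtain ⟨p, q, hq, h⟩ := hfr o
    exact ⟨p, q, by rwa [hιx, hρι], by rwa [hιx, hιx]⟩
  · apply frac_of_closed
    intro A hyA hcl
    have hYA : Y ∈ A := hyA 0
    have hξA : ξ ∈ A := hyA 1
    have hwA : w ∈ A := hyA 2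
    have hqA : ∀ q : Polynomial k, Polynomial.aeval w q ∈ A := fun q =>
      (Algebra.adjoin_le (by simpa using hwA) : Algebra.adjoin k {w} ≤ A)
        (Polynomial.aeval_mem_adjoin_singleton k w)
    have hηA : ∀ e, η e ∈ A := by
      intro e
      obtain ⟨c, d, hd, rfl⟩ := IsFractionRing.div_surjective (A := Polynomial k) e
      have hd0 : algebraMap _ κ₀ d ≠ 0 := by
        have := nonZeroDivisors.ne_zero hd
        simpa using this
      refine hcl _ _ _ (hqA c) (hqA d) ?_ ?_
      · rw [← hηq]
        intro h
        have := hρη (algebraMap _ κ₀ d)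
        rw [h, map_zero] at this
        exact hd0 (hemb (by rw [← this, map_zero]))
      · rw [← hηq, ← hηq, ← map_mul, mul_div_cancel₀ _ hd0]
    have h0 : xy 0 ∈ A := by
      have : xy 0 = ξ * Y + a 0 := by rw [← hXξ]; ring
      rw [this]; exact A.add_mem (A.mul_mem hξA hYA) (hηA _)
    have h1 : xy 1 ∈ A := by
      have : xy 1 = Y + a 1 := by rw [hY]; ring
      rw [this]; exact A.add_mem hYA (hηA _)
    have hxyA : ∀ i, xy i ∈ A := by
      intro i; fin_cases i
      · exact h0
      · exact h1
    have hgA : ∀ g : MvPolynomial (Fin 2) k, aeval xy g ∈ A := aeval_mem_sub A xy hxyA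
    have hr20 : r2 ≠ 0 := by rintro h; rw [h] at hρr2; simp at hρr2
    have hzA : z ∈ A := by
      refine hcl (w * r2 - r1) (fO * r2) z (A.sub_mem (A.mul_mem hwA (hgA _)) (hgA _))
        (A.mul_mem (hgA _) (hgA _)) (mul_ne_zero hfO0 hr20) ?_
      linear_combination -hwr
    have hxA : ∀ i, x i ∈ A := by
      intro i
      refine Fin.cases hzA (fun j => hxyA j) i
    intro o
    obtain ⟨p, q, hq, h⟩ := hfr o
    refine hcl (ι p) (ι q) o ?_ ?_ ?_ h
    · rw [← hιx]; exact aeval_mem_sub A x hxA p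
    · rw [← hιx]; exact aeval_mem_sub A x hxA q
    · rw [ne_eq, map_eq_zero_iff _ hιinj]; rintro rfl; simp at hq
  · exact hY0

theorem core_transfer
    (f R1 R2 : MvPolynomial (Fin 2) k) (ab : Fin 2 → RatFunc k) (hf : f ≠ 0)
    (hker : ∀ p, aeval ab p = 0 ↔ f ∣ p) (hR2 : aeval ab R2 ≠ 0)
    (hR1 : aeval ab R1 = RatFunc.X * aeval ab R2) :
    ∃ (Q R : MvPolynomial (Fin 3) k) (P G : Fin 3 → MvPolynomial (Fin 3) k) (N : ℕ)
      (U V : MvPolynomial (Fin 3) k),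
      Q.totalDegree ≤ N ∧ R.totalDegree ≤ N ∧ (∀ m, (P m).totalDegree ≤ N) ∧
      (∀ m, (G m).totalDegree ≤ N) ∧ ¬ rename Fin.succ f ∣ U ∧ ¬ X 0 ∣ V ∧
      (∀ v, eval v U ≠ 0 → eval v Q ≠ 0 ∧ ∃ e : k, e ≠ 0 ∧
        eval (Fin.cons (eval v Q) (fun m => eval v (P m))) (hmg N R) = e ∧
        ∀ m, eval (Fin.cons (eval v Q) (fun m => eval v (P m))) (hmg N (G m)) = e * v m) ∧
      (∀ v, eval v V ≠ 0 → eval v R ≠ 0 ∧ ∃ e : k, e ≠ 0 ∧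
        eval (Fin.cons (eval v R) (fun m => eval v (G m))) (hmg N Q) = e ∧
        ∀ m, eval (Fin.cons (eval v R) (fun m => eval v (G m))) (hmg N (P m)) = e * v m) ∧
      (∀ v, eval v (rename Fin.succ f) = 0 → eval v (P 0) = 0) ∧
      (∀ v, v 0 = 0 → eval v R ≠ 0 →
        eval (fun m => eval v (G m) / eval v R) (rename Fin.succ f) = 0) := by
  let κ₀ := RatFunc k
  let κ := FractionRing (Polynomial κ₀)
  have hZ : Transcendental κ₀ (algebraMap (Polynomial κ₀) κ Polynomial.X) :=
    (transcendental_algebraMap_iff (IsFractionRing.injective (Polynomial κ₀) κ)).2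
      (Polynomial.transcendental_X κ₀)
  obtain ⟨O, _, _, _, ρ, x, y, h1, h2, h3, h4, h5, h6⟩ := core (κ₀ := κ₀) hZ f R1 R2 ab hf hker hR2
    (by rw [hR1, ← RatFunc.algebraMap_X])
  exact transfer ρ x y _ h1 h2 h3 h4 h5 h6

end Core3

open MvPolynomial ProjSp

section Main1

variable {k : Type} [Field k]

/-- Affine coordinates. -/
def affc {n : ℕ} (w : Fin (n + 1) → k) : Fin n → k := fun i => w i.succ / w 0

/-- Homogenized tuple. -/
noncomputable def hc {n m : ℕ} (N : ℕ) (Q : MvPolynomial (Fin n) k)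
    (P : Fin m → MvPolynomial (Fin n) k) :
    Fin (m + 1) → MvPolynomial (Fin (n + 1)) k :=
  Fin.cons (hmg N Q) (fun m => hmg N (P m))

lemma hmg_affc {n N : ℕ} {p : MvPolynomial (Fin n) k} (hN : p.totalDegree ≤ N)
    (w : Fin (n + 1) → k) (hw : w 0 ≠ 0) :
    eval w (hmg N p) = w 0 ^ N * eval (affc w) p :=
  hmg_eval hN w _ (fun i => by simp [affc]; field_simp)

lemma hc_eval {n m N : ℕ} {Q : MvPolynomial (Fin n) k}
    {P : Fin m → MvPolynomial (Fin n) k} (hQ : Q.totalDegree ≤ N)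
    (hP : ∀ m, (P m).totalDegree ≤ N) (w : Fin (n + 1) → k) (hw : w 0 ≠ 0) :
    (fun i => eval w (hc N Q P i)) =
      w 0 ^ N • (Fin.cons (eval (affc w) Q) (fun m => eval (affc w) (P m)) : Fin (m + 1) → k) := by
  ext i
  refine Fin.cases ?_ (fun j => ?_) i
  · simp [hc, hmg_affc hQ w hw]
  · simp [hc, hmg_affc (hP j) w hw]

lemma hc_homog {n m N : ℕ} {Q : MvPolynomial (Fin n) k}
    {P : Fin m → MvPolynomial (Fin n) k} (hQ : Q.totalDegree ≤ N)
    (hP : ∀ m, (P m).totalDegree ≤ N) (i) : (hc N Q P i).IsHomogeneous N := by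
  refine Fin.cases ?_ (fun j => ?_) i
  · simpa [hc] using hmg_homog hQ
  · simpa [hc] using hmg_homog (hP j)

lemma half {Q R : MvPolynomial (Fin 3) k} {P G : Fin 3 → MvPolynomial (Fin 3) k} {N : ℕ}
    {U : MvPolynomial (Fin 3) k} (hQ : Q.totalDegree ≤ N) (hR : R.totalDegree ≤ N)
    (hP : ∀ m, (P m).totalDegree ≤ N) (hG : ∀ m, (G m).totalDegree ≤ N)
    (hU : ∀ v, eval v U ≠ 0 → eval v Q ≠ 0 ∧ ∃ e : k, e ≠ 0 ∧
        eval (Fin.cons (eval v Q) (fun m => eval v (P m))) (hmg N R) = e ∧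
        ∀ m, eval (Fin.cons (eval v Q) (fun m => eval v (P m))) (hmg N (G m)) = e * v m)
    (w : Fin 4 → k) (hw : w 0 ≠ 0) (hwU : eval (affc w) U ≠ 0) :
    eval w (hc N Q P 0) ≠ 0 ∧ ∃ c : k, c ≠ 0 ∧
      (fun j => eval (fun i => eval w (hc N Q P i)) (hc N R G j)) = c • w := by
  obtain ⟨h1, e, he, h2, h3⟩ := hU _ hwU
  constructor
  · have := congrFun (hc_eval hQ hP w hw) 0
    simp only [Pi.smul_apply, Fin.cons_zero, smul_eq_mul] at this
    rw [this]
    exact mul_ne_zero (pow_ne_zero _ hw) h1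
  · refine ⟨(w 0 ^ N) ^ N * e / w 0, div_ne_zero (mul_ne_zero (pow_ne_zero _ (pow_ne_zero _ hw)) he) hw, ?_⟩
    rw [hc_eval hQ hP w hw]
    ext j
    rw [homog_eval (hc_homog hR hG j)]
    refine Fin.cases ?_ (fun j => ?_) j
    · simp only [hc, Fin.cons_zero, h2, Pi.smul_apply, smul_eq_mul]
      field_simp
    · simp only [hc, Fin.cons_succ, h3, Pi.smul_apply, smul_eq_mul, affc]
      field_simp

lemma birat_of_vec {n m : ℕ} (F : RatMap k n m) (G : RatMap k m n) (A : Set (ProjSp k n))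
    (B : Set (ProjSp k m)) (u : MvPolynomial (Fin (n + 1)) k) (v : MvPolynomial (Fin (m + 1)) k)
    (du dv : ℕ) (hu : u.IsHomogeneous du) (hv : v.IsHomogeneous dv)
    (hA : ∃ x, ∃ hx : x ≠ 0, Projectivization.mk k x hx ∈ A ∧ eval x u ≠ 0)
    (hB : ∃ x, ∃ hx : x ≠ 0, Projectivization.mk k x hx ∈ B ∧ eval x v ≠ 0)
    (hF : ∀ x (hx : x ≠ 0), eval x u ≠ 0 → ∃ h : vecApp F x ≠ 0,
      (∃ c : k, c ≠ 0 ∧ vecApp G (vecApp F x) = c • x) ∧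
      (Projectivization.mk k x hx ∈ A → Projectivization.mk k (vecApp F x) h ∈ B))
    (hG : ∀ x (hx : x ≠ 0), eval x v ≠ 0 → ∃ h : vecApp G x ≠ 0,
      (∃ c : k, c ≠ 0 ∧ vecApp F (vecApp G x) = c • x) ∧
      (Projectivization.mk k x hx ∈ B → Projectivization.mk k (vecApp G x) h ∈ A)) :
    IsBirationalOn k F G A B := by
  refine ⟨u, v, du, dv, hu, hv, ?_, ?_, ?_, ?_⟩
  · obtain ⟨x, hx, h1, h2⟩ := hA
    intro h
    exact h2 ((mem_zeros_mk hu x hx).1 (h h1))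
  · obtain ⟨x, hx, h1, h2⟩ := hB
    intro h
    exact h2 ((mem_zeros_mk hv x hx).1 (h h1))
  · intro x
    induction x using Projectivization.ind with
    | h x hx =>
    rintro ⟨h1, h2⟩
    rw [mem_zeros_mk hu] at h2
    obtain ⟨h, ⟨c, hc, hcx⟩, h3⟩ := hF x hx h2
    have h4 : vecApp G (vecApp F x) ≠ 0 := by rw [hcx]; exact smul_ne_zero hc hx
    rw [defined_mk, app_mk F x hx h, defined_mk, app_mk G _ h h4]
    refine ⟨h, h3 h1, h4, ?_⟩
    rw [Projectivization.mk_eq_mk_iff']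
    exact ⟨c, hcx.symm⟩
  · intro x
    induction x using Projectivization.ind with
    | h x hx =>
    rintro ⟨h1, h2⟩
    rw [mem_zeros_mk hv] at h2
    obtain ⟨h, ⟨c, hc, hcx⟩, h3⟩ := hG x hx h2
    have h4 : vecApp F (vecApp G x) ≠ 0 := by rw [hcx]; exact smul_ne_zero hc hx
    rw [defined_mk, app_mk G x hx h, defined_mk, app_mk F _ h h4]
    refine ⟨h, h3 h1, h4, ?_⟩
    rw [Projectivization.mk_eq_mk_iff']
    exact ⟨c, hcx.symm⟩

lemma prime_rename_succ {n : ℕ} {f : MvPolynomial (Fin n) k} (hf : Irreducible f) :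
    Prime (rename Fin.succ f : MvPolynomial (Fin (n + 1)) k) := by
  rw [← MulEquiv.prime_iff (finSuccEquiv k n), finSucc_rename, Polynomial.prime_C_iff]
  exact hf.prime

/-- Coordinate forms of a basis. -/
noncomputable def coordForm (e : Module.Basis (Fin 4) k (Fin 4 → k)) (i : Fin 4) :
    MvPolynomial (Fin 4) k :=
  ∑ m, C (e.repr (Pi.single m 1) i) * X m

lemma coordForm_homog (e : Module.Basis (Fin 4) k (Fin 4 → k)) (i : Fin 4) :
    (coordForm e i).IsHomogeneous 1 :=
  IsHomogeneous.sum _ _ _ fun m _ => isHomogeneous_C_mul_X _ _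

lemma coordForm_eval (e : Module.Basis (Fin 4) k (Fin 4 → k)) (i : Fin 4) (v : Fin 4 → k) :
    eval v (coordForm e i) = e.repr v i := by
  have h : v = ∑ m, v m • (Pi.single m 1 : Fin 4 → k) := by
    ext j; simp [Finset.sum_apply, Pi.single_apply]
  conv_rhs => rw [h]
  simp [coordForm, mul_comm]

lemma eval_aeval {σ τ : Type} (L : σ → MvPolynomial τ k) (p : MvPolynomial σ k) (v : τ → k) :
    eval v (aeval L p) = eval (fun i => eval v (L i)) p := by
  rw [← aeval_eq_eval, ← aeval_eq_eval, comp_aeval_apply]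

lemma eval_aeval_coord (e : Module.Basis (Fin 4) k (Fin 4 → k)) (p : MvPolynomial (Fin 4) k)
    (v : Fin 4 → k) : eval v (aeval (coordForm e) p) = eval (fun i => e.repr v i) p := by
  rw [eval_aeval]
  simp only [coordForm_eval]

set_option maxHeartbeats 1000000 in
theorem main1 [IsAlgClosed k] (e : Module.Basis (Fin 4) k (Fin 4 → k)) (S : Set (ProjSp k 3))
    (f R1 R2 : MvPolynomial (Fin 2) k) (ab : Fin 2 → RatFunc k) (hf : Irreducible f)
    (hker : ∀ p, aeval ab p = 0 ↔ f ∣ p) (hR2 : aeval ab R2 ≠ 0)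
    (hR1 : aeval ab R1 = RatFunc.X * aeval ab R2)
    (hS : ∀ v (hv : v ≠ 0), e.repr v 0 ≠ 0 → (Projectivization.mk k v hv ∈ S ↔
      eval (fun i : Fin 2 => e.repr v i.succ.succ / e.repr v 0) f = 0)) :
    CremonaEquivalent k S (zeros k (X 1)) := by
  obtain ⟨Q, R, P, G, N, U, V, hQ, hR, hP, hG, hfU, hXV, hU, hV, hfP, hGf⟩ :=
    core_transfer f R1 R2 ab hf.ne_zero hker hR2 hR1
  have hf3 := prime_rename_succ hf
  have hf3e : ∀ a : Fin 3 → k, eval a (rename Fin.succ f) = eval (fun i => a i.succ) f := by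
    intro a; rw [eval_rename]; rfl
  let Fm : RatMap k 3 3 :=
    { deg := N
      comp := fun i => aeval (coordForm e) (hc N Q P i)
      homog := fun i => by
        have := (hc_homog hQ hP i).aeval (coordForm e) (coordForm_homog e)
        rwa [one_mul] at this }
  let Gm : RatMap k 3 3 :=
    { deg := N
      comp := fun m => ∑ i, C (e i m) * hc N R G i
      homog := fun m => IsHomogeneous.sum _ _ _ fun i _ => (hc_homog hR hG i).C_mul _ }
  let rp : (Fin 4 → k) → (Fin 4 → k) := fun v i => e.repr v i
  have hrp0 : ∀ v, rp v = 0 → v = 0 := by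
    intro v h
    exact e.repr.map_eq_zero_iff.1 (by ext i; exact congrFun h i)
  have hFv : ∀ v, vecApp Fm v = fun i => eval (rp v) (hc N Q P i) := by
    intro v; ext i
    exact eval_aeval_coord e _ v
  have hGv : ∀ y, vecApp Gm y = ∑ i, eval y (hc N R G i) • e i := by
    intro y; ext m
    simp [vecApp, Gm, Finset.sum_apply, mul_comm]
  have hGr : ∀ y, rp (vecApp Gm y) = fun i => eval y (hc N R G i) := by
    intro y; ext j
    rw [hGv]
    simp only [rp]
    rw [e.repr_sum_self]
  have hrpinj : ∀ v v', rp v = rp v' → v = v' := by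
    intro v v' h
    exact e.repr.injective (by ext i; exact congrFun h i)
  have hrpsmul : ∀ (c : k) v, rp (c • v) = c • rp v := by
    intro c v; ext i; simp [rp]
  have hrpsurj : ∀ w, ∃ v, rp v = w := by
    intro w
    refine ⟨∑ i, w i • e i, ?_⟩
    ext j
    simp only [rp]; rw [e.repr_sum_self]
  set u0 := X 0 * hmg U.totalDegree U with hu0
  set v0 := X 0 * hmg V.totalDegree V with hv0
  have hu0h : u0.IsHomogeneous (1 + U.totalDegree) := (isHomogeneous_X _ _).mul (hmg_homog le_rfl)
  have hv0h : v0.IsHomogeneous (1 + V.totalDegree) := (isHomogeneous_X _ _).mul (hmg_homog le_rfl)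
  have hev : ∀ (W : MvPolynomial (Fin 3) k) (w : Fin 4 → k),
      eval w (X 0 * hmg W.totalDegree W) ≠ 0 ↔ w 0 ≠ 0 ∧ eval (affc w) W ≠ 0 := by
    intro W w
    by_cases hw : w 0 = 0
    · simp [hw]
    · simp [hmg_affc le_rfl w hw, hw]
  set u := aeval (coordForm e) u0 with hu
  have huh : u.IsHomogeneous (1 + U.totalDegree) := by
    have := hu0h.aeval (coordForm e) (coordForm_homog e)
    rwa [one_mul] at this
  have huev : ∀ v, eval v u = eval (rp v) u0 := by
    intro v; exact eval_aeval_coord e _ v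
  -- points of S
  have hcons0 : ∀ a : Fin 3 → k, affc (Fin.cons 1 a : Fin 4 → k) = a := by
    intro a; ext i; simp [affc]
  obtain ⟨a, ha, haU⟩ : ∃ a, eval a (rename Fin.succ f) = 0 ∧ eval a U ≠ 0 := by
    by_contra! hcon
    exact hfU (dvd_of_vanish hf3.irreducible hcon)
  obtain ⟨b, hb, hbV⟩ : ∃ b : Fin 3 → k, eval b (X 0) = 0 ∧ eval b V ≠ 0 := by
    by_contra! hcon
    exact hXV (dvd_of_vanish (X_prime (R := k) (σ := Fin 3)).irreducible hcon)
  obtain ⟨xS, hxS⟩ := hrpsurj (Fin.cons 1 a)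
  have hxS0 : xS ≠ 0 := by
    rintro rfl
    have := congrFun hxS 0
    simp [rp] at this
  have hxSu : eval xS u ≠ 0 := by
    rw [huev, hxS, hev]; exact ⟨by simp, by rwa [hcons0]⟩
  have hxSS : Projectivization.mk k xS hxS0 ∈ S := by
    have h0 : e.repr xS 0 = 1 := congrFun hxS 0
    rw [hS xS hxS0 (by rw [h0]; exact one_ne_zero), ← ha, hf3e, h0]
    congr 2
    funext i
    rw [div_one]
    exact congrFun hxS i.succ.succ
  set yS : Fin 4 → k := Fin.cons 1 b with hyS
  have hyS0 : yS ≠ 0 := by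
    intro h
    have := congrFun h 0
    simp [hyS] at this
  have hySv : eval yS v0 ≠ 0 := by
    rw [hev]; exact ⟨by simp [hyS], by rwa [hyS, hcons0]⟩
  have hyH : Projectivization.mk k yS hyS0 ∈ zeros k (X 1) := by
    rw [mem_zeros_mk (isHomogeneous_X _ _)]
    rw [eval_X] at hb ⊢
    exact hb
  have hFF : ∀ x, eval x u ≠ 0 → rp x 0 ≠ 0 ∧ eval (affc (rp x)) U ≠ 0 ∧ vecApp Fm x ≠ 0 ∧
      ∃ c : k, c ≠ 0 ∧ vecApp Gm (vecApp Fm x) = c • x := by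
    intro x hxu
    rw [huev, hev] at hxu
    obtain ⟨h1, h2⟩ := hxu
    obtain ⟨h3, c, hc0, hcx⟩ := half hQ hR hP hG hU (rp x) h1 h2
    refine ⟨h1, h2, ?_, c, hc0, ?_⟩
    · intro h
      rw [hFv] at h
      exact h3 (congrFun h 0)
    · apply hrpinj
      rw [hGr, hFv, hrpsmul]; exact hcx
  have hGG : ∀ y, eval y v0 ≠ 0 → y 0 ≠ 0 ∧ eval (affc y) V ≠ 0 ∧ vecApp Gm y ≠ 0 ∧
      ∃ c : k, c ≠ 0 ∧ vecApp Fm (vecApp Gm y) = c • y := by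
    intro y hy
    rw [hev] at hy
    obtain ⟨h1, h2⟩ := hy
    obtain ⟨h3, c, hc0, hcx⟩ := half hR hQ hG hP hV y h1 h2
    refine ⟨h1, h2, ?_, c, hc0, ?_⟩
    · intro h
      have := hGr y
      rw [h] at this
      apply h3
      rw [← congrFun this 0]
      simp [rp]
    · rw [hFv, hGr]; exact hcx
  refine ⟨Fm, Gm, ?_, ?_⟩
  · refine birat_of_vec Fm Gm _ _ u v0 _ _ huh hv0h ⟨xS, hxS0, trivial, hxSu⟩
      ⟨yS, hyS0, trivial, hySv⟩ ?_ ?_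
    · intro x _ hxu
      obtain ⟨_, _, h, h'⟩ := hFF x hxu
      exact ⟨h, h', fun _ => trivial⟩
    · intro x _ hxu
      obtain ⟨_, _, h, h'⟩ := hGG x hxu
      exact ⟨h, h', fun _ => trivial⟩
  · refine birat_of_vec Fm Gm _ _ u v0 _ _ huh hv0h ⟨xS, hxS0, hxSS, hxSu⟩
      ⟨yS, hyS0, hyH, hySv⟩ ?_ ?_
    · intro x hx hxu
      obtain ⟨h1, h2, h, h'⟩ := hFF x hxu
      refine ⟨h, h', fun hxS' => ?_⟩
      rw [mem_zeros_mk (isHomogeneous_X _ _), eval_X, hFv, hc_eval hQ hP _ h1]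
      have h5 : eval (affc (rp x)) (P 0) = 0 := by
        apply hfP
        rw [hf3e]
        exact (hS x hx h1).1 hxS'
      change _ * (Fin.cons _ _ : Fin 4 → k) (Fin.succ 0) = 0
      rw [Fin.cons_succ, h5, mul_zero]
    · intro y hy hyu
      obtain ⟨h1, h2, h, h'⟩ := hGG y hyu
      refine ⟨h, h', fun hyS' => ?_⟩
      rw [mem_zeros_mk (isHomogeneous_X _ _), eval_X] at hyS'
      have hRb := (hV _ h2).1
      have hr := hGr y
      rw [hc_eval hR hG _ h1] at hr
      have hr0 : rp (vecApp Gm y) 0 = y 0 ^ N * eval (affc y) R := by rw [hr]; simp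
      have hpow : y 0 ^ N ≠ 0 := pow_ne_zero _ h1
      have hrs : ∀ i : Fin 3, rp (vecApp Gm y) i.succ = y 0 ^ N * eval (affc y) (G i) := by
        intro i; rw [hr]; simp
      rw [hS _ h (by change rp (vecApp Gm y) 0 ≠ 0; rw [hr0]; exact mul_ne_zero hpow hRb)]
      have := hGf (affc y) (by
        change y (Fin.succ 0) / y 0 = 0
        rw [show y (Fin.succ 0) = 0 from hyS', zero_div]) hRb
      rw [hf3e] at this
      rw [← this]
      congr 2
      funext i
      change rp (vecApp Gm y) i.succ.succ / rp (vecApp Gm y) 0 = _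
      rw [hr0, hrs]
      field_simp

end Main1

open MvPolynomial ProjSp

section Curve

variable {k : Type} [Field k]

lemma vec_of_birat {n m : ℕ} (F : RatMap k n m) (G : RatMap k m n) (A : Set (ProjSp k n))
    (B : Set (ProjSp k m)) (u : MvPolynomial (Fin (n + 1)) k) (du : ℕ) (hu : u.IsHomogeneous du)
    (h : ∀ x ∈ A \ zeros k u,
      F.Defined x ∧ F.app x ∈ B ∧ G.Defined (F.app x) ∧ G.app (F.app x) = x)
    (x : Fin (n + 1) → k) (hx : x ≠ 0) (hA : Projectivization.mk k x hx ∈ A) (hxu : eval x u ≠ 0) :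
    ∃ h : vecApp F x ≠ 0, Projectivization.mk k (vecApp F x) h ∈ B ∧
      ∃ c : k, c ≠ 0 ∧ vecApp G (vecApp F x) = c • x := by
  obtain ⟨h1, h2, h3, h4⟩ := h (Projectivization.mk k x hx)
    ⟨hA, by rw [mem_zeros_mk hu]; exact hxu⟩
  rw [defined_mk] at h1
  rw [app_mk F x hx h1] at h2 h3 h4
  rw [defined_mk] at h3
  rw [app_mk G _ h1 h3, Projectivization.mk_eq_mk_iff'] at h4
  obtain ⟨c, hc⟩ := h4
  refine ⟨h1, h2, c, ?_, hc.symm⟩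
  rintro rfl
  rw [zero_smul] at hc
  exact h3 hc.symm

lemma ratfunc_iff [Infinite k] (c : Polynomial k) (n : Fin 2 → Polynomial k) (D q : Polynomial k)
    (hc : c ≠ 0) (hD : D ≠ 0) (p1 p2 : MvPolynomial (Fin 2) k) :
    aeval (fun i => algebraMap _ (RatFunc k) (n i) / algebraMap _ (RatFunc k) c) p1 =
      algebraMap _ (RatFunc k) q *
        aeval (fun i => algebraMap _ (RatFunc k) (n i) / algebraMap _ (RatFunc k) c) p2 ↔
    ∀ t, c.eval t ≠ 0 → D.eval t ≠ 0 → eval (fun i => (n i).eval t / c.eval t) p1 =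
      q.eval t * eval (fun i => (n i).eval t / c.eval t) p2 := by
  set N := max p1.totalDegree p2.totalDegree with hN
  set w : Fin 3 → Polynomial k := Fin.cons c n with hw
  set ab : Fin 2 → RatFunc k :=
    (fun i => algebraMap _ (RatFunc k) (n i) / algebraMap _ (RatFunc k) c) with hab
  have hc' : algebraMap _ (RatFunc k) c ≠ 0 := by simpa using hc
  have key1 : ∀ p : MvPolynomial (Fin 2) k, p.totalDegree ≤ N →
      algebraMap _ (RatFunc k) (aeval w (hmg N p)) = algebraMap _ (RatFunc k) c ^ N * aeval ab p := by
    intro p hp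
    have := hmg_aeval hp (fun i => IsScalarTower.toAlgHom k (Polynomial k) (RatFunc k) (w i)) ab
      (fun i => by
        simp only [hw, hab, Fin.cons_succ, Fin.cons_zero, IsScalarTower.coe_toAlgHom']
        rw [mul_div_cancel₀ _ hc'])
    rw [← comp_aeval_apply] at this
    exact this
  have key2 : ∀ p : MvPolynomial (Fin 2) k, p.totalDegree ≤ N → ∀ t, c.eval t ≠ 0 →
      (aeval w (hmg N p)).eval t = c.eval t ^ N * eval (fun i => (n i).eval t / c.eval t) p := by
    intro p hp t ht
    have := hmg_aeval hp (fun i => Polynomial.aeval t (w i)) (fun i => (n i).eval t / c.eval t)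
      (fun i => by
        simp only [hw, Fin.cons_succ, Fin.cons_zero, Polynomial.coe_aeval_eq_eval]
        rw [mul_div_cancel₀ _ ht])
    rw [← comp_aeval_apply] at this
    exact this
  have h1 := le_max_left p1.totalDegree p2.totalDegree
  have h2 := le_max_right p1.totalDegree p2.totalDegree
  rw [← hN] at h1 h2
  set A1 := aeval w (hmg N p1) with hA1
  set A2 := aeval w (hmg N p2) with hA2
  have e1 : aeval ab p1 = algebraMap _ (RatFunc k) q * aeval ab p2 ↔ A1 = q * A2 := by
    rw [← (IsFractionRing.injective (Polynomial k) (RatFunc k)).eq_iff, map_mul, key1 _ h1,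
      key1 _ h2, mul_left_comm]
    exact (mul_right_inj' (pow_ne_zero N hc')).symm
  rw [e1]
  constructor
  · intro h t ht _
    have := congrArg (Polynomial.eval t) h
    rw [Polynomial.eval_mul, key2 _ h1 t ht, key2 _ h2 t ht, mul_left_comm] at this
    exact mul_left_cancel₀ (pow_ne_zero N ht) this
  · intro h
    have : (A1 - q * A2) * (c * D) = 0 := by
      apply Polynomial.funext
      intro t
      by_cases ht : c.eval t = 0
      · simp [ht]
      by_cases hd : D.eval t = 0
      · simp [hd]
      have := h t ht hd
      have k1 : A1.eval t = _ := key2 _ h1 t ht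
      have k2 : A2.eval t = _ := key2 _ h2 t ht
      simp only [Polynomial.eval_mul, Polynomial.eval_sub, Polynomial.eval_zero]
      rw [k1, k2, this]
      ring
    rcases mul_eq_zero.1 this with h | h
    · exact sub_eq_zero.1 h
    · exact absurd h (mul_ne_zero hc hD)

/-- Points of the affine plane. -/
noncomputable def ptv (e : Module.Basis (Fin 4) k (Fin 4 → k)) (a : Fin 2 → k) : Fin 4 → k :=
  e 0 + a 0 • e 2 + a 1 • e 3

lemma ptv_repr (e : Module.Basis (Fin 4) k (Fin 4 → k)) (a : Fin 2 → k) :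
    e.repr (ptv e a) 0 = 1 ∧ e.repr (ptv e a) 1 = 0 ∧ ∀ i : Fin 2, e.repr (ptv e a) i.succ.succ = a i := by
  refine ⟨?_, ?_, ?_⟩
  · simp [ptv, Finsupp.single_apply]
  · simp [ptv, Finsupp.single_apply]
  · intro i
    fin_cases i
    · simp [ptv, Finsupp.single_apply]
    · simp [ptv, Finsupp.single_apply]

lemma ptv_ne (e : Module.Basis (Fin 4) k (Fin 4 → k)) (a : Fin 2 → k) : ptv e a ≠ 0 := by
  intro h
  have := (ptv_repr e a).1
  rw [h] at this
  simp at this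

lemma eq_ptv (e : Module.Basis (Fin 4) k (Fin 4 → k)) (v : Fin 4 → k) (h0 : e.repr v 0 ≠ 0) :
    v = e.repr v 0 • ptv e (fun i => e.repr v i.succ.succ / e.repr v 0) + e.repr v 1 • e 1 := by
  conv_lhs => rw [← e.sum_repr v]
  rw [Fin.sum_univ_four, ptv]
  simp only [smul_add, smul_smul]
  rw [mul_div_cancel₀ _ h0, mul_div_cancel₀ _ h0]
  change e.repr v 0 • e 0 + e.repr v 1 • e 1 + e.repr v 2 • e 2 + e.repr v 3 • e 3 =
    e.repr v 0 • e 0 + e.repr v 2 • e 2 + e.repr v 3 • e 3 + e.repr v 1 • e 1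
  abel

/-- Restriction to the affine plane. -/
noncomputable def resP (e : Module.Basis (Fin 4) k (Fin 4 → k)) (Φ : MvPolynomial (Fin 4) k) :
    MvPolynomial (Fin 2) k :=
  aeval (fun m => C (e 0 m) + X 0 * C (e 2 m) + X 1 * C (e 3 m)) Φ

lemma resP_eval (e : Module.Basis (Fin 4) k (Fin 4 → k)) (Φ : MvPolynomial (Fin 4) k)
    (a : Fin 2 → k) : eval a (resP e Φ) = eval (ptv e a) Φ := by
  rw [resP, eval_aeval]
  congr 2
  funext m
  simp [ptv]

/-- Extension of a plane polynomial to a form. -/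
noncomputable def extP (e : Module.Basis (Fin 4) k (Fin 4 → k)) (p : MvPolynomial (Fin 2) k) :
    MvPolynomial (Fin 4) k :=
  aeval (fun i : Fin 3 => coordForm e (![0, 2, 3] i)) (hmg p.totalDegree p)

lemma extP_homog (e : Module.Basis (Fin 4) k (Fin 4 → k)) (p : MvPolynomial (Fin 2) k) :
    (extP e p).IsHomogeneous p.totalDegree := by
  have := (hmg_homog (le_refl p.totalDegree)).aeval
    (fun i : Fin 3 => coordForm e (![0, 2, 3] i)) (fun i => coordForm_homog e _)
  rwa [one_mul] at this

lemma extP_eval (e : Module.Basis (Fin 4) k (Fin 4 → k)) (p : MvPolynomial (Fin 2) k)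
    (v : Fin 4 → k) (h0 : e.repr v 0 ≠ 0) :
    eval v (extP e p) = e.repr v 0 ^ p.totalDegree *
      eval (fun i : Fin 2 => e.repr v i.succ.succ / e.repr v 0) p := by
  rw [extP, eval_aeval]
  simp only [coordForm_eval]
  apply hmg_eval le_rfl
  intro i
  fin_cases i
  · change e.repr v 2 = e.repr v 0 * (e.repr v 2 / e.repr v 0)
    rw [mul_div_cancel₀ _ h0]
  · change e.repr v 3 = e.repr v 0 * (e.repr v 3 / e.repr v 0)
    rw [mul_div_cancel₀ _ h0]

lemma extP_ptv (e : Module.Basis (Fin 4) k (Fin 4 → k)) (p : MvPolynomial (Fin 2) k)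
    (a : Fin 2 → k) : eval (ptv e a) (extP e p) = eval a p := by
  obtain ⟨h0, _, h2⟩ := ptv_repr e a
  rw [extP_eval e p _ (by rw [h0]; exact one_ne_zero)]
  simp only [h0, h2, one_pow, one_mul, div_one]

lemma ptv_zero (e : Module.Basis (Fin 4) k (Fin 4 → k)) : ptv e 0 = e 0 := by
  simp [ptv]

theorem curve_data [IsAlgClosed k] (e : Module.Basis (Fin 4) k (Fin 4 → k)) (S H : Set (ProjSp k 3))
    (f : MvPolynomial (Fin 2) k) (hf : Irreducible f)
    (hS : ∀ v (hv : v ≠ 0), e.repr v 0 ≠ 0 → (Projectivization.mk k v hv ∈ S ↔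
      eval (fun i : Fin 2 => e.repr v i.succ.succ / e.repr v 0) f = 0))
    (hH : ∀ v (hv : v ≠ 0), Projectivization.mk k v hv ∈ H ↔ e.repr v 1 = 0)
    (F : RatMap k 3 1) (G : RatMap k 1 3) (u : MvPolynomial (Fin 4) k) (v : MvPolynomial (Fin 2) k)
    (dv : ℕ) (hvh : v.IsHomogeneous dv)
    (hF : ∀ x (hx : x ≠ 0), Projectivization.mk k x hx ∈ S ∩ H → eval x u ≠ 0 →
      ∃ c : k, c ≠ 0 ∧ vecApp G (vecApp F x) = c • x)
    (hG : ∀ y, y ≠ 0 → eval y v ≠ 0 → ∃ h : vecApp G y ≠ 0,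
      Projectivization.mk k (vecApp G y) h ∈ S ∩ H ∧
      ∃ c : k, c ≠ 0 ∧ vecApp F (vecApp G y) = c • y)
    (t0 : k) (hv0 : eval ![1, t0] v ≠ 0) (he0 : vecApp G ![1, t0] = e 0) (hu0 : eval (e 0) u ≠ 0) :
    ∃ (ab : Fin 2 → RatFunc k) (R1 R2 : MvPolynomial (Fin 2) k),
      (∀ p, aeval ab p = 0 ↔ f ∣ p) ∧ aeval ab R2 ≠ 0 ∧
      aeval ab R1 = RatFunc.X * aeval ab R2 := by
  haveI : Infinite k := IsAlgClosed.instInfinite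
  have h1t : ∀ t : k, (![1, t] : Fin 2 → k) ≠ 0 := by
    intro t h
    have := congrFun h 0
    simp at this
  let γ : MvPolynomial (Fin 4) k → Polynomial k := fun Φ =>
    aeval (![1, Polynomial.X] : Fin 2 → Polynomial k) (aeval G.comp Φ)
  have hbin : ∀ (t : k) (b : MvPolynomial (Fin 2) k),
      (aeval (![1, Polynomial.X] : Fin 2 → Polynomial k) b).eval t = eval ![1, t] b := by
    intro t b
    have := comp_aeval_apply (![1, Polynomial.X] : Fin 2 → Polynomial k) (Polynomial.aeval t) b
    rw [Polynomial.coe_aeval_eq_eval] at this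
    rw [this, ← aeval_eq_eval]
    congr 2
    funext i; fin_cases i <;> simp
  have hγ : ∀ t Φ, (γ Φ).eval t = eval (vecApp G ![1, t]) Φ := by
    intro t Φ
    rw [hbin, eval_aeval]; rfl
  set c := γ (coordForm e 0) with hc
  let n : Fin 2 → Polynomial k := fun i => γ (coordForm e i.succ.succ)
  set D := aeval (![1, Polynomial.X] : Fin 2 → Polynomial k) v with hD
  have hct : ∀ t, c.eval t = e.repr (vecApp G ![1, t]) 0 := by
    intro t; rw [hc, hγ, coordForm_eval]
  have hnt : ∀ t i, (n i).eval t = e.repr (vecApp G ![1, t]) i.succ.succ := by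
    intro t i; simp only [n]; rw [hγ, coordForm_eval]
  have hDt : ∀ t, D.eval t = eval ![1, t] v := fun t => hbin t v
  have hc0 : c.eval t0 ≠ 0 := by rw [hct, he0]; simp
  have hD0 : D.eval t0 ≠ 0 := by rw [hDt]; exact hv0
  have hcne : c ≠ 0 := by intro h; rw [h] at hc0; simp at hc0
  have hDne : D ≠ 0 := by intro h; rw [h] at hD0; simp at hD0
  have hrf := fun q p1 p2 => ratfunc_iff c n D q hcne hDne p1 p2
  set ab : Fin 2 → RatFunc k :=
    (fun i => algebraMap _ (RatFunc k) (n i) / algebraMap _ (RatFunc k) c) with hab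
  have hrf0 : ∀ p, aeval ab p = 0 ↔ ∀ t, c.eval t ≠ 0 → D.eval t ≠ 0 →
      eval (fun i => (n i).eval t / c.eval t) p = 0 := by
    intro p
    have := hrf 0 p 0
    simpa using this
  -- good parameters
  have hgood : ∀ t, c.eval t ≠ 0 → D.eval t ≠ 0 →
      vecApp G ![1, t] = c.eval t • ptv e (fun i => (n i).eval t / c.eval t) ∧
      eval (fun i => (n i).eval t / c.eval t) f = 0 ∧
      ∃ s : k, s ≠ 0 ∧ vecApp F (vecApp G ![1, t]) = s • ![1, t] := by
    intro t ht hd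
    rw [hDt] at hd
    obtain ⟨h, ⟨hs, hh⟩, hF'⟩ := hG _ (h1t t) hd
    rw [hct] at ht
    refine ⟨?_, ?_, hF'⟩
    · have := eq_ptv e _ ht
      rw [(hH _ h).1 hh, zero_smul, add_zero] at this
      simp only [hct, hnt]
      exact this
    · simp only [hct, hnt]
      exact (hS _ h ht).1 hs
  have hFres : ∀ t, c.eval t ≠ 0 → D.eval t ≠ 0 → ∃ s : k, s ≠ 0 ∧ ∀ i,
      eval (fun i => (n i).eval t / c.eval t) (resP e (F.comp i)) = s * ![1, t] i := by
    intro t ht hd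
    obtain ⟨h1, _, s, hs, h2⟩ := hgood t ht hd
    have hp : c.eval t ^ F.deg ≠ 0 := pow_ne_zero _ ht
    refine ⟨s / c.eval t ^ F.deg, div_ne_zero hs hp, fun i => ?_⟩
    rw [h1, vecApp_smul] at h2
    have h3 := congrFun h2 i
    rw [resP_eval]
    simp only [Pi.smul_apply, smul_eq_mul, vecApp] at h3
    rw [div_mul_eq_mul_div, eq_div_iff hp, ← h3, mul_comm]
  refine ⟨ab, resP e (F.comp 1), resP e (F.comp 0), ?_, ?_, ?_⟩
  · intro p
    constructor
    · intro hp
      rw [hrf0] at hp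
      -- the binary form
      have hPb : aeval G.comp (extP e p) = 0 := by
        set Pb := aeval G.comp (extP e p) with hPb
        set K := aeval G.comp (coordForm e 0) with hK
        have h1 := (extP_homog e p).aeval G.comp G.homog
        have h2 := (coordForm_homog e 0).aeval G.comp G.homog
        have h3 := (h1.mul h2).mul hvh
        have h4 : Pb * K * v = 0 := by
          refine binary_zero h3 (fun t => ?_)
          by_cases ht : c.eval t = 0
          · have : eval ![1, t] K = 0 := by
              rw [hK, ← hbin]; exact ht
            rw [map_mul, map_mul, this]; simp
          by_cases hd : D.eval t = 0
          · rw [hDt] at hd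
            rw [map_mul, hd, mul_zero]
          have h5 := hp t ht hd
          have h6 : eval ![1, t] Pb = 0 := by
            rw [hPb, eval_aeval]
            change eval (vecApp G ![1, t]) (extP e p) = 0
            rw [extP_eval e p _ (by rw [← hct]; exact ht)]
            simp only [hct, hnt] at h5
            rw [h5, mul_zero]
          rw [map_mul, map_mul, h6]; simp
        have hvne : v ≠ 0 := by rintro rfl; simp at hv0
        have hKne : K ≠ 0 := by
          intro h
          apply hcne
          rw [hc]
          change aeval _ K = 0
          rw [h, map_zero]
        rcases mul_eq_zero.1 h4 with h | h
        · rcases mul_eq_zero.1 h with h | h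
          · exact h
          · exact absurd h hKne
        · exact absurd h hvne
      have hdvd : f ∣ p * resP e u := by
        apply dvd_of_vanish hf
        intro a ha
        by_cases hu : eval (ptv e a) u = 0
        · rw [map_mul, resP_eval, hu, mul_zero]
        obtain ⟨r0, r1, r2⟩ := ptv_repr e a
        have hSm : Projectivization.mk k (ptv e a) (ptv_ne e a) ∈ S := by
          rw [hS _ _ (by rw [r0]; exact one_ne_zero)]
          simp only [r0, r2, div_one]
          exact ha
        obtain ⟨s, hs, hsx⟩ := hF _ (ptv_ne e a) ⟨hSm, (hH _ _).2 r1⟩ hu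
        have h7 : eval (vecApp G (vecApp F (ptv e a))) (extP e p) = 0 := by
          have := congrArg (eval (vecApp F (ptv e a))) hPb
          rw [eval_aeval, map_zero] at this
          exact this
        rw [hsx, homog_eval (extP_homog e p), extP_ptv] at h7
        rcases mul_eq_zero.1 h7 with h | h
        · exact absurd h (pow_ne_zero _ hs)
        · rw [map_mul, h, zero_mul]
      rcases hf.prime.dvd_or_dvd hdvd with h | h
      · exact h
      · exfalso
        obtain ⟨q, hq⟩ := h
        have h8 := congrArg (eval 0) hq
        rw [resP_eval, ptv_zero, map_mul] at h8
        have h9 : eval 0 f = 0 := by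
          obtain ⟨_, h9, _⟩ := hgood t0 hc0 hD0
          rw [← h9]
          congr 2
          funext i
          rw [hnt, he0]
          fin_cases i <;> simp [Finsupp.single_apply]
        rw [h9, zero_mul] at h8
        exact hu0 h8
    · rintro ⟨q, rfl⟩
      rw [hrf0]
      intro t ht hd
      rw [map_mul, (hgood t ht hd).2.1, zero_mul]
  · intro h
    rw [hrf0] at h
    obtain ⟨s, hs, h'⟩ := hFres t0 hc0 hD0
    have := h' 0
    rw [h t0 hc0 hD0] at this
    simp at this
    exact hs this.symm
  · rw [← RatFunc.algebraMap_X, hrf]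
    intro t ht hd
    obtain ⟨s, hs, h'⟩ := hFres t ht hd
    rw [h', h']
    simp [mul_comm]

end Curve

open MvPolynomial ProjSp

section Final

variable {k : Type} [Field k]

lemma exists_basis (l : (Fin 4 → k) →ₗ[k] k) (p e0 : Fin 4 → k) (hp : l p ≠ 0) (he : e0 ≠ 0)
    (hl : l e0 = 0) : ∃ e : Module.Basis (Fin 4) k (Fin 4 → k),
      e 0 = e0 ∧ e 1 = p ∧ l (e 2) = 0 ∧ l (e 3) = 0 := by
  have hr : Module.finrank k (LinearMap.range l) = 1 := by
    rw [LinearMap.range_eq_top.2 (LinearMap.surjective (fun h => hp (by rw [h]; rfl)))]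
    simp
  have hk : Module.finrank k (LinearMap.ker l) = 3 := by
    have := LinearMap.finrank_range_add_finrank_ker l
    rw [hr, Module.finrank_fin_fun] at this
    omega
  let e0' : LinearMap.ker l := ⟨e0, hl⟩
  have he' : e0' ≠ 0 := fun h => he (congrArg Subtype.val h)
  have h1 : LinearIndependent k (fun _ : Fin 1 => e0') := linearIndependent_unique_iff.2 he'
  obtain ⟨x1, h2⟩ := exists_linearIndependent_cons_of_lt_finrank h1 (by omega)
  obtain ⟨x2, h3⟩ := exists_linearIndependent_cons_of_lt_finrank h2 (by omega)
  have h4 := h3.map' (LinearMap.ker l).subtype (Submodule.ker_subtype _)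
  have h5 : p ∉ Submodule.span k (Set.range ((LinearMap.ker l).subtype ∘
      (Fin.cons x2 (Fin.cons x1 (fun _ : Fin 1 => e0') : Fin 2 → LinearMap.ker l) :
        Fin 3 → LinearMap.ker l))) := by
    intro h
    have : Submodule.span k (Set.range ((LinearMap.ker l).subtype ∘
      (Fin.cons x2 (Fin.cons x1 (fun _ : Fin 1 => e0') : Fin 2 → LinearMap.ker l) :
        Fin 3 → LinearMap.ker l))) ≤ LinearMap.ker l := by
      rw [Submodule.span_le]
      rintro _ ⟨i, rfl⟩
      exact Subtype.property _
    exact hp (this h)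
  have h6 := linearIndependent_finCons.2 ⟨h4, h5⟩
  let b := basisOfLinearIndependentOfCardEqFinrank h6 (by simp)
  refine ⟨b.reindex (finRotate 4), ?_, ?_, ?_, ?_⟩
  · rw [Module.Basis.reindex_apply, coe_basisOfLinearIndependentOfCardEqFinrank]
    have : (finRotate 4).symm 0 = 3 := by decide
    rw [this]
    rfl
  · rw [Module.Basis.reindex_apply, coe_basisOfLinearIndependentOfCardEqFinrank]
    have : (finRotate 4).symm 1 = 0 := by decide
    rw [this]
    rfl
  · rw [Module.Basis.reindex_apply, coe_basisOfLinearIndependentOfCardEqFinrank]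
    have : (finRotate 4).symm 2 = 1 := by decide
    rw [this]
    exact x2.2
  · rw [Module.Basis.reindex_apply, coe_basisOfLinearIndependentOfCardEqFinrank]
    have : (finRotate 4).symm 3 = 2 := by decide
    rw [this]
    exact x1.2

lemma exists_linear {n : ℕ} (h : MvPolynomial (Fin n) k) (hh : h.IsHomogeneous 1) :
    ∃ l : (Fin n → k) →ₗ[k] k, ∀ v, l v = eval v h := by
  have hm : h ∈ MvPolynomial.homogeneousSubmodule (Fin n) k 1 := hh
  rw [homogeneousSubmodule_one_eq_span_X] at hm
  induction hm using Submodule.span_induction with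
  | mem x hx =>
    obtain ⟨i, rfl⟩ := hx
    exact ⟨LinearMap.proj i, fun v => by simp⟩
  | zero => exact ⟨0, fun v => by simp⟩
  | add x y hx hy h1 h2 =>
    have hx' : x.IsHomogeneous 1 := by
      rw [← homogeneousSubmodule_one_eq_span_X] at hx; exact hx
    have hy' : y.IsHomogeneous 1 := by
      rw [← homogeneousSubmodule_one_eq_span_X] at hy; exact hy
    obtain ⟨l1, h1⟩ := h1 hx'
    obtain ⟨l2, h2⟩ := h2 hy'
    exact ⟨l1 + l2, fun v => by simp [h1, h2]⟩
  | smul a x hx h1 =>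
    have hx' : x.IsHomogeneous 1 := by
      rw [← homogeneousSubmodule_one_eq_span_X] at hx; exact hx
    obtain ⟨l1, h1⟩ := h1 hx'
    exact ⟨a • l1, fun v => by simp [h1, smul_eval]⟩

lemma cone_mem {n : ℕ} {S : Set (ProjSp k n)} {q : Fin (n + 1) → k} (hq : q ≠ 0)
    (hc : IsConeWithVertex k S (Projectivization.mk k q hq)) {v w : Fin (n + 1) → k}
    (hv : v ≠ 0) (hw : w ≠ 0) (h : Projectivization.mk k v hv ∈ S) (a b : k)
    (hwe : w = a • v + b • q) : Projectivization.mk k w hw ∈ S := by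
  apply hc.2 _ h
  change (Projectivization.mk k w hw).submodule ≤ _
  rw [Projectivization.submodule_mk, Projectivization.submodule_mk, Projectivization.submodule_mk,
    Submodule.span_singleton_le_iff_mem, hwe]
  exact add_mem (Submodule.mem_sup_right (Submodule.smul_mem _ _ (Submodule.mem_span_singleton_self v)))
    (Submodule.mem_sup_left (Submodule.smul_mem _ _ (Submodule.mem_span_singleton_self q)))

lemma exists_factor_of_prime {R : Type*} [CommRing R] [IsDomain R] [UniqueFactorizationMonoid R]
    (P : R → Prop) (h1 : ¬ P 1) (hm : ∀ x y, P (x * y) → P x ∨ P y) (hd : ∀ x y, P x → x ∣ y → P y)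
    (g : R) (hg : g ≠ 0) (hP : P g) : ∃ f, Irreducible f ∧ f ∣ g ∧ P f := by
  classical
  have key : ∀ s : Multiset R, P s.prod → ∃ f ∈ s, P f := by
    intro s
    induction s using Multiset.induction with
    | empty => intro h; simp at h; exact absurd h h1
    | cons a s ih =>
      intro h
      rw [Multiset.prod_cons] at h
      rcases hm _ _ h with h | h
      · exact ⟨a, Multiset.mem_cons_self _ _, h⟩
      · obtain ⟨f, hf, h'⟩ := ih h
        exact ⟨f, Multiset.mem_cons_of_mem hf, h'⟩
  have hass := UniqueFactorizationMonoid.factors_prod hg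
  obtain ⟨f, hf, h'⟩ := key _ (hd _ _ hP hass.symm.dvd)
  exact ⟨f, UniqueFactorizationMonoid.irreducible_of_factor f hf,
    UniqueFactorizationMonoid.dvd_of_mem_factors hf, h'⟩

/-- The plane section has an irreducible affine equation. -/
lemma exists_irred_eq [IsAlgClosed k] (e : Module.Basis (Fin 4) k (Fin 4 → k)) (d : ℕ)
    (φ : MvPolynomial (Fin 4) k) (hφ : φ.IsHomogeneous d) (hirr : Irreducible φ)
    (S : Set (ProjSp k 3)) (hS : S = zeros k φ)
    (hc : IsConeWithVertex k S (Projectivization.mk k (e 1) (e.ne_zero 1)))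
    (h0 : eval (e 0) φ = 0) :
    ∃ f : MvPolynomial (Fin 2) k, Irreducible f ∧
      ∀ v (hv : v ≠ 0), e.repr v 0 ≠ 0 → (Projectivization.mk k v hv ∈ S ↔
        eval (fun i : Fin 2 => e.repr v i.succ.succ / e.repr v 0) f = 0) := by
  have : Infinite k := IsAlgClosed.instInfinite
  have hS1 : ∀ v (hv : v ≠ 0), e.repr v 0 ≠ 0 → (Projectivization.mk k v hv ∈ S ↔
        eval (fun i : Fin 2 => e.repr v i.succ.succ / e.repr v 0) (resP e φ) = 0) := by
    intro v hv hv0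
    rw [resP_eval, ← mem_zeros_mk hφ _ (ptv_ne e _), ← hS]
    have hE := eq_ptv e v hv0
    constructor
    · intro h
      refine cone_mem _ hc hv (ptv_ne e _) h (e.repr v 0)⁻¹ (-((e.repr v 0)⁻¹ * e.repr v 1)) ?_
      generalize ptv e (fun i => e.repr v i.succ.succ / e.repr v 0) = z at hE
      generalize e.repr v 1 = b at hE
      generalize e.repr v 0 = a at hE hv0
      rw [hE, smul_add, smul_smul, smul_smul, inv_mul_cancel₀ hv0, one_smul, neg_smul]
      abel
    · intro h
      exact cone_mem _ hc (ptv_ne e _) hv h _ _ hE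
  have hS2 : ∀ v, e.repr v 0 ≠ 0 → (eval v φ = 0 ↔
      eval (fun i : Fin 2 => e.repr v i.succ.succ / e.repr v 0) (resP e φ) = 0) := by
    intro v hv0
    have hv : v ≠ 0 := by rintro rfl; simp at hv0
    rw [← mem_zeros_mk hφ v hv, ← hS, hS1 v hv hv0]
  have hnd : ¬ φ ∣ coordForm e 0 := by
    rintro ⟨q, hq⟩
    have := congrArg (eval (e 0)) hq
    rw [coordForm_eval, map_mul, h0, zero_mul] at this
    simp at this
  set g := resP e φ with hg
  have hgne : g ≠ 0 := by
    intro h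
    have : coordForm e 0 * φ = 0 := by
      apply MvPolynomial.funext
      intro v
      by_cases hv : e.repr v 0 = 0
      · rw [map_mul, coordForm_eval, hv]; simp
      · rw [map_mul, (hS2 v hv).2 (by rw [h]; simp)]; simp
    rcases mul_eq_zero.1 this with h | h
    · exact hnd (by rw [h]; exact dvd_zero _)
    · exact hirr.ne_zero h
  have hg0 : eval 0 g = 0 := by rw [hg, resP_eval, ptv_zero, h0]
  obtain ⟨f, hf, hfg, hP⟩ := exists_factor_of_prime
    (fun P : MvPolynomial (Fin 2) k => ∀ a, eval a g = 0 → eval a P = 0)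
    (by intro h; have := h 0 hg0; simp at this)
    (by
      intro P1 P2 h
      have hdv : φ ∣ coordForm e 0 * (extP e P1 * extP e P2) := by
        apply dvd_of_vanish hirr
        intro v hv
        by_cases hv0 : e.repr v 0 = 0
        · rw [map_mul, coordForm_eval, hv0, zero_mul]
        · have := h _ ((hS2 v hv0).1 hv)
          rw [map_mul, map_mul, extP_eval e _ v hv0, extP_eval e _ v hv0]
          rw [map_mul] at this
          rcases mul_eq_zero.1 this with h | h <;> rw [h] <;> simp
      have hx : ∀ P, φ ∣ extP e P → ∀ a, eval a g = 0 → eval a P = 0 := by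
        rintro P ⟨q, hq⟩ a ha
        rw [← extP_ptv e P a, hq, map_mul, ← resP_eval, ← hg, ha, zero_mul]
      rcases hirr.prime.dvd_or_dvd hdv with h | h
      · exact absurd h hnd
      rcases hirr.prime.dvd_or_dvd h with h | h
      · exact Or.inl (hx _ h)
      · exact Or.inr (hx _ h))
    (by
      rintro x y h ⟨q, rfl⟩ a ha
      rw [map_mul, h a ha, zero_mul])
    g hgne (fun a h => h)
  refine ⟨f, hf, fun v hv hv0 => ?_⟩
  rw [hS1 v hv hv0]
  constructor
  · exact hP _
  · intro h
    obtain ⟨q, hq⟩ := hfg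
    rw [hq, map_mul, h, zero_mul]

end Final

/-- Corollary `cor:3`, last part.
Every rational cone in `ℙ³` — an irreducible reduced cone whose (general) plane
section `C = S ∩ H` (for a plane `H` missing the vertex; for cones all such
sections are projectively equivalent) is a rational curve, i.e. birational to
`ℙ¹` — is Cremona equivalent to a plane. -/
theorem rational_cone_in_P3_cremonaEquivalent_to_plane
    (k : Type) [Field k] [IsAlgClosed k] [CharZero k]
    (S : Set (ProjSp k 3)) (p : ProjSp k 3) (H : Set (ProjSp k 3))
    (hS : IsIrredDivisor k S) (hcone : IsConeWithVertex k S p)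
    (hH : IsHyperplane k H) (hp : p ∉ H)
    (hrat : Birational k (S ∩ H) (Set.univ : Set (ProjSp k 1))) :
    ∃ H' : Set (ProjSp k 3), IsHyperplane k H' ∧ CremonaEquivalent k S H' := by
  have : Infinite k := IsAlgClosed.instInfinite
  refine ⟨zeros k (X 1), ⟨X 1, X_ne_zero _, isHomogeneous_X _ _, rfl⟩, ?_⟩
  obtain ⟨d, φ, hd, hφ, hirr, hSφ⟩ := hS
  obtain ⟨h, hh0, hh, hHh⟩ := hH
  obtain ⟨F, G, u, v, du, dv, hu, hv, hAu, hBv, hF, hG⟩ := hrat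
  have hF' := vec_of_birat F G _ _ u du hu hF
  have hG' := vec_of_birat G F _ _ v dv hv hG
  obtain ⟨l, hl⟩ := exists_linear h hh
  induction p using Projectivization.ind with
  | h q hq =>
  have hlq : l q ≠ 0 := by
    rw [hl, Ne, ← mem_zeros_mk hh q hq, ← hHh]; exact hp
  have hvne : v ≠ 0 := by
    rintro rfl
    apply hBv
    intro x _
    simp [zeros]
  have hune : aeval G.comp u ≠ 0 := by
    intro h0
    apply hAu
    intro x hx
    induction x using Projectivization.ind with
    | h x hx0 =>
    by_contra hxu
    rw [mem_zeros_mk hu] at hxu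
    obtain ⟨h1, _, c, hc, h2⟩ := hF' x hx0 hx hxu
    have h3 := congrArg (eval (vecApp F x)) h0
    rw [eval_aeval, map_zero] at h3
    change eval (vecApp G (vecApp F x)) u = 0 at h3
    rw [h2, homog_eval hu] at h3
    rcases mul_eq_zero.1 h3 with h | h
    · exact pow_ne_zero _ hc h
    · exact hxu h
  obtain ⟨t0, ht0⟩ : ∃ t0, eval ![1, t0] (v * aeval G.comp u) ≠ 0 := by
    by_contra hcon
    push Not at hcon
    exact mul_ne_zero hvne hune (binary_zero (hv.mul (hu.aeval G.comp G.homog)) hcon)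
  rw [map_mul] at ht0
  have hv0 := left_ne_zero_of_mul ht0
  have hu0 := right_ne_zero_of_mul ht0
  rw [eval_aeval] at hu0
  change eval (vecApp G ![1, t0]) u ≠ 0 at hu0
  have h1t : (![1, t0] : Fin 2 → k) ≠ 0 := by
    intro h
    have := congrFun h 0
    simp at this
  obtain ⟨hg0, ⟨hgS, hgH⟩, _⟩ := hG' ![1, t0] h1t trivial hv0
  rw [hHh, mem_zeros_mk hh, ← hl] at hgH
  rw [hSφ, mem_zeros_mk hφ] at hgS
  obtain ⟨e, he0, he1, he2, he3⟩ := exists_basis l q _ hlq hg0 hgH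
  rw [← he0] at hgS hgH hu0
  have hlr : ∀ v, l v = e.repr v 1 * l q := by
    intro v
    conv_lhs => rw [← e.sum_repr v]
    rw [Fin.sum_univ_four]
    simp [hgH, he1, he2, he3]
  have hHe : ∀ v (hv : v ≠ 0), Projectivization.mk k v hv ∈ H ↔ e.repr v 1 = 0 := by
    intro v hv
    rw [hHh, mem_zeros_mk hh, ← hl, hlr]
    simp [hlq]
  subst he1
  obtain ⟨f, hf, hSf⟩ := exists_irred_eq e d φ hφ hirr S hSφ hcone hgS
  obtain ⟨ab, R1, R2, hker, hR2, hR1⟩ := curve_data e S H f hf hSf hHe F G u v dv hv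
    (fun x hx hm hxu => (hF' x hx hm hxu).2.2)
    (fun y hy hyv => hG' y hy trivial hyv) t0 hv0 he0.symm hu0
  exact main1 e S f R1 R2 ab hf hker hR2 hR1 hSf
end

section
/- Let C₁ and C₂ be irreducible reduced divisors in P^{n-1} that are Cremona equivalent, and let S₁, S₂ ⊂ Pⁿ be cones over C₁ and C₂ respectively (embedding P^{n-1} as a hyperplane of Pⁿ and taking vertices outside it). Then S₁ is Cremona equivalent to S₂. -/
/-!
Concrete framework: projective space over a field `k` as `Projectivization`,
hypersurfaces as zero loci of homogeneous polynomials, rational maps given by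
tuples of homogeneous polynomials, birational maps between (closed) subvarieties,
and Cremona equivalence of divisors.
-/

open MvPolynomial

open ProjSp

/-- The linear embedding `k^{m+1} → k^{m+2}` appending a last coordinate `0`. -/
def extendZeroLinear (k : Type) [Field k] (m : ℕ) :
    (Fin (m + 1) → k) →ₗ[k] (Fin (m + 2) → k) where
  toFun v := Fin.snoc v 0
  map_add' u v := by
    funext i
    refine Fin.lastCases ?_ (fun j => ?_) i <;> simp
  map_smul' c v := by
    funext i
    refine Fin.lastCases ?_ (fun j => ?_) i <;> simp

lemma extendZeroLinear_injective (k : Type) [Field k] (m : ℕ) :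
    Function.Injective (extendZeroLinear k m) := by
  intro u v h
  funext j
  have := congrFun h j.castSucc
  simpa [extendZeroLinear] using this

/-- The embedding of `ℙᵐ` into `ℙ^{m+1}` as the hyperplane `(x_{m+1} = 0)`. -/
noncomputable def hyperplaneEmbedding (k : Type) [Field k] (m : ℕ) :
    ProjSp k m → ProjSp k (m + 1) :=
  Projectivization.map (extendZeroLinear k m) (extendZeroLinear_injective k m)

namespace ConeProof

variable {k : Type} [Field k]

/-- Evaluation of a rational map on a vector. -/
noncomputable def ev {n m : ℕ} (F : RatMap k n m) (v : Fin (n + 1) → k) : Fin (m + 1) → k :=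
  fun i => eval v (F.comp i)

lemma eval_smul_homog {n d : ℕ} {f : MvPolynomial (Fin n) k} (hf : f.IsHomogeneous d)
    (c : k) (v : Fin n → k) : eval (c • v) f = c ^ d * eval v f := by
  rw [eval_eq, eval_eq, Finset.mul_sum]
  refine Finset.sum_congr rfl fun s hs => ?_
  have hd : ∑ i ∈ s.support, s i = d := by
    have := hf (mem_support_iff.1 hs)
    rw [Finsupp.weight_apply, Finsupp.sum] at this
    simpa using this
  simp only [Pi.smul_apply, smul_eq_mul, mul_pow, Finset.prod_mul_distrib]
  rw [Finset.prod_pow_eq_pow_sum, hd]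
  ring

lemma ev_smul {n m : ℕ} (F : RatMap k n m) (c : k) (v : Fin (n + 1) → k) :
    ev F (c • v) = c ^ F.deg • ev F v := by
  funext i
  simp [ev, eval_smul_homog (F.homog i)]

lemma mk_mem_zeros {n d : ℕ} {f : MvPolynomial (Fin (n + 1)) k} (hf : f.IsHomogeneous d)
    (v : Fin (n + 1) → k) (hv : v ≠ 0) :
    (Projectivization.mk k v hv) ∈ zeros k f ↔ eval v f = 0 := by
  obtain ⟨a, ha⟩ := Projectivization.exists_smul_eq_mk_rep k v hv
  rw [zeros, Set.mem_ofPred_eq, ← ha, Units.smul_def, eval_smul_homog hf]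
  simp

lemma mk_defined {n m : ℕ} (F : RatMap k n m) (v : Fin (n + 1) → k) (hv : v ≠ 0) :
    F.Defined (Projectivization.mk k v hv) ↔ ev F v ≠ 0 := by
  obtain ⟨a, ha⟩ := Projectivization.exists_smul_eq_mk_rep k v hv
  change ev F (Projectivization.mk k v hv).rep ≠ 0 ↔ _
  rw [← ha, Units.smul_def, ev_smul]
  simp

lemma mk_app {n m : ℕ} (F : RatMap k n m) (v : Fin (n + 1) → k) (hv : v ≠ 0)
    (h : ev F v ≠ 0) :
    F.app (Projectivization.mk k v hv) = Projectivization.mk k (ev F v) h := by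
  have h' : (fun i => eval (Projectivization.mk k v hv).rep (F.comp i)) ≠ 0 :=
    (mk_defined F v hv).2 h
  rw [RatMap.app, dif_pos h', Projectivization.mk_eq_mk_iff']
  obtain ⟨a, ha⟩ := Projectivization.exists_smul_eq_mk_rep k v hv
  refine ⟨(a : k) ^ F.deg, ?_⟩
  rw [← ev_smul, ← Units.smul_def, ha]
  rfl

/-- Projection from the point `[a : 1]` to the hyperplane. -/
def pr {m : ℕ} (a : Fin (m + 1) → k) (z : Fin (m + 2) → k) : Fin (m + 1) → k :=
  fun i => z i.castSucc - a i * z (Fin.last _)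

lemma pr_smul {m : ℕ} (a : Fin (m + 1) → k) (c : k) (z : Fin (m + 2) → k) :
    pr a (c • z) = c • pr a z := by
  funext i
  simp [pr]; ring

lemma pr_ext {m : ℕ} (a : Fin (m + 1) → k) {z z' : Fin (m + 2) → k}
    (h : pr a z = pr a z') (hl : z (Fin.last _) = z' (Fin.last _)) : z = z' := by
  funext i
  refine Fin.lastCases hl (fun j => ?_) i
  have := congrFun h j
  simpa [pr, hl] using this

/-- The linear forms giving the projection. -/
noncomputable def prPoly {m : ℕ} (a : Fin (m + 1) → k) (i : Fin (m + 1)) :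
    MvPolynomial (Fin (m + 2)) k :=
  X i.castSucc - C (a i) * X (Fin.last _)

lemma prPoly_homog {m : ℕ} (a : Fin (m + 1) → k) (i : Fin (m + 1)) :
    (prPoly a i).IsHomogeneous 1 :=
  (isHomogeneous_X _ _).sub ((isHomogeneous_X _ _).C_mul _)

lemma eval_aeval' {σ τ : Type} (L : σ → MvPolynomial τ k) (z : τ → k) (f : MvPolynomial σ k) :
    eval z (aeval L f) = eval (fun i => eval z (L i)) f := by
  induction f using MvPolynomial.induction_on with
  | C a => simp
  | add p q hp hq => rw [map_add, map_add, map_add, hp, hq]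
  | mul_X p i hp => rw [map_mul, map_mul, map_mul, hp, aeval_X, eval_X]

lemma eval_prPoly {m : ℕ} (a : Fin (m + 1) → k) (z : Fin (m + 2) → k)
    (f : MvPolynomial (Fin (m + 1)) k) :
    eval z (aeval (prPoly a) f) = eval (pr a z) f := by
  rw [eval_aeval']
  congr 2
  funext i
  simp [prPoly, pr]

/-- The cone over `A` with vertex `[a : 1]`. -/
def coneSet {m : ℕ} (a : Fin (m + 1) → k) (A : Set (ProjSp k m)) : Set (ProjSp k (m + 1)) :=
  {z | ∀ h : pr a z.rep ≠ 0, Projectivization.mk k _ h ∈ A}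

lemma mk_congr_mem {n : ℕ} {A : Set (ProjSp k n)} {v w : Fin (n + 1) → k} (hv : v ≠ 0)
    (hw : w ≠ 0) (c : k) (h : v = c • w) (hA : Projectivization.mk k w hw ∈ A) :
    Projectivization.mk k v hv ∈ A := by
  have : Projectivization.mk k v hv = Projectivization.mk k w hw :=
    (Projectivization.mk_eq_mk_iff' k v w hv hw).2 ⟨c, h.symm⟩
  rwa [this]

lemma mk_mem_coneSet {m : ℕ} (a : Fin (m + 1) → k) (A : Set (ProjSp k m))
    (z : Fin (m + 2) → k) (hz : z ≠ 0) :
    Projectivization.mk k z hz ∈ coneSet a A ↔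
      ∀ h : pr a z ≠ 0, Projectivization.mk k _ h ∈ A := by
  obtain ⟨c, hc⟩ := Projectivization.exists_smul_eq_mk_rep k z hz
  have e : pr a (Projectivization.mk k z hz).rep = (c : k) • pr a z := by
    rw [← hc, Units.smul_def, pr_smul]
  have e' : pr a z = (c : k)⁻¹ • pr a (Projectivization.mk k z hz).rep := by
    rw [e, smul_smul]; simp
  constructor
  · intro H h
    have h' : pr a (Projectivization.mk k z hz).rep ≠ 0 := by
      rw [e]; simpa using h
    exact mk_congr_mem h h' _ e' (H h')
  · intro H h
    have h' : pr a z ≠ 0 := by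
      rw [e']; simpa using h
    exact mk_congr_mem h h' _ e (H h')

/-- The cone of a Cremona transformation. -/
noncomputable def coneMap {m : ℕ} (F : RatMap k m m) (l : MvPolynomial (Fin (m + 1)) k)
    (hl : l.IsHomogeneous 1) (a b : Fin (m + 1) → k) : RatMap k (m + 1) (m + 1) where
  deg := 1 + F.deg
  comp := Fin.snoc (α := fun _ => MvPolynomial (Fin (m + 2)) k)
    (fun i => aeval (prPoly a) (l * F.comp i) +
      C (b i) * (X (Fin.last _) * aeval (prPoly a) (aeval F.comp l)))
    (X (Fin.last _) * aeval (prPoly a) (aeval F.comp l))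
  homog := by
    have h1 : ∀ i, (aeval (prPoly a) (l * F.comp i)).IsHomogeneous (1 + F.deg) := fun i => by
      simpa using (hl.mul (F.homog i)).aeval (prPoly a) (prPoly_homog a)
    have h2 : (X (Fin.last (m + 1)) * aeval (prPoly a) (aeval F.comp l)).IsHomogeneous
        (1 + F.deg) := by
      have := (hl.aeval F.comp F.homog).aeval (prPoly a) (prPoly_homog a)
      refine (isHomogeneous_X k _).mul ?_
      simpa using this
    intro i
    refine Fin.lastCases ?_ (fun j => ?_) i
    · simpa using h2
    · simpa using (h1 j).add (h2.C_mul _)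

lemma ev_coneMap_last {m : ℕ} (F : RatMap k m m) (l : MvPolynomial (Fin (m + 1)) k)
    (hl : l.IsHomogeneous 1) (a b : Fin (m + 1) → k) (z : Fin (m + 2) → k) :
    ev (coneMap F l hl a b) z (Fin.last _) = z (Fin.last _) * eval (ev F (pr a z)) l := by
  simp only [ev, coneMap, Fin.snoc_last, map_mul, eval_X, eval_prPoly]
  rw [eval_aeval']
  rfl

lemma pr_ev_coneMap {m : ℕ} (F : RatMap k m m) (l : MvPolynomial (Fin (m + 1)) k)
    (hl : l.IsHomogeneous 1) (a b : Fin (m + 1) → k) (z : Fin (m + 2) → k) :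
    pr b (ev (coneMap F l hl a b) z) = eval (pr a z) l • ev F (pr a z) := by
  funext i
  have e : eval (pr a z) (aeval F.comp l) = eval (ev F (pr a z)) l := eval_aeval' _ _ _
  rw [pr, ev_coneMap_last, ← e]
  simp only [ev, coneMap, Fin.snoc_castSucc, map_add, map_mul, eval_X, eval_C, eval_prPoly,
    Pi.smul_apply, smul_eq_mul]
  ring

/-- The bad locus. -/
noncomputable def bad {m : ℕ} (F : RatMap k m m) (l u : MvPolynomial (Fin (m + 1)) k)
    (a : Fin (m + 1) → k) : MvPolynomial (Fin (m + 2)) k :=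
  aeval (prPoly a) (u * (l * aeval F.comp l))

lemma bad_homog {m : ℕ} (F : RatMap k m m) {l u : MvPolynomial (Fin (m + 1)) k} {d : ℕ}
    (hl : l.IsHomogeneous 1) (hu : u.IsHomogeneous d)
    (a : Fin (m + 1) → k) : (bad F l u a).IsHomogeneous (1 * (d + (1 + F.deg * 1))) :=
  (hu.mul (hl.mul (hl.aeval F.comp F.homog))).aeval (prPoly a) (prPoly_homog a)

lemma eval_bad {m : ℕ} (F : RatMap k m m) (l u : MvPolynomial (Fin (m + 1)) k)
    (a : Fin (m + 1) → k) (z : Fin (m + 2) → k) :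
    eval z (bad F l u a) =
      eval (pr a z) u * (eval (pr a z) l * eval (ev F (pr a z)) l) := by
  rw [bad, eval_prPoly, map_mul, map_mul, eval_aeval']; rfl

/-- One direction of `IsBirationalOn`. -/
def Half {n : ℕ} (F G : RatMap k n n) (A B : Set (ProjSp k n))
    (u : MvPolynomial (Fin (n + 1)) k) : Prop :=
  ∀ x ∈ A \ zeros k u,
      F.Defined x ∧ F.app x ∈ B ∧ G.Defined (F.app x) ∧ G.app (F.app x) = x

lemma half_cone {m d : ℕ} {F G : RatMap k m m} {A B : Set (ProjSp k m)}
    {u : MvPolynomial (Fin (m + 1)) k} (hu : u.IsHomogeneous d) (H : Half F G A B u)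
    {l : MvPolynomial (Fin (m + 1)) k} (hl : l.IsHomogeneous 1) (a b : Fin (m + 1) → k) :
    Half (coneMap F l hl a b) (coneMap G l hl b a) (coneSet a A) (coneSet b B)
      (bad F l u a) := by
  intro x
  induction x using Projectivization.ind with
  | h z hz =>
  rintro ⟨hA, hb⟩
  rw [mk_mem_coneSet] at hA
  rw [mk_mem_zeros (bad_homog F hl hu a), eval_bad] at hb
  have hub : eval (pr a z) u ≠ 0 := fun h => hb (by simp [h])
  have hlb : eval (pr a z) l ≠ 0 := fun h => hb (by simp [h])
  have hfb : eval (ev F (pr a z)) l ≠ 0 := fun h => hb (by simp [h])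
  have hy : pr a z ≠ 0 := by
    intro h
    apply hlb
    rw [h]
    have := eval_smul_homog hl 0 (0 : Fin (m + 1) → k)
    simpa using this
  obtain ⟨h1, h2, h3, h4⟩ := H (Projectivization.mk k _ hy)
    ⟨hA hy, by rwa [mk_mem_zeros hu]⟩
  rw [mk_defined] at h1
  rw [mk_app F _ hy h1] at h2 h3 h4
  rw [mk_defined] at h3
  rw [mk_app G _ h1 h3, Projectivization.mk_eq_mk_iff'] at h4
  obtain ⟨q, hq⟩ := h4
  have hq0 : q ≠ 0 := by
    rintro rfl
    exact h3 (by rw [← hq]; simp)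
  set w := ev (coneMap F l hl a b) z with hw
  have hprw : pr b w = eval (pr a z) l • ev F (pr a z) := pr_ev_coneMap F l hl a b z
  have hprw0 : pr b w ≠ 0 := by
    rw [hprw]; exact smul_ne_zero hlb h1
  have hw0 : w ≠ 0 := by
    intro h
    apply hprw0
    rw [h]; funext i; simp [pr]
  have key : ev (coneMap G l hl b a) w =
      (eval (pr a z) l ^ (G.deg + 1) * eval (ev F (pr a z)) l * q) • z := by
    apply pr_ext a
    · rw [pr_ev_coneMap, hprw, pr_smul, ev_smul, ← hq, eval_smul_homog hl]
      simp only [smul_smul]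
      congr 1
      ring
    · rw [ev_coneMap_last, hprw, ev_smul, ← hq, eval_smul_homog hl, eval_smul_homog hl, hw,
        ev_coneMap_last]
      simp only [Pi.smul_apply, smul_eq_mul]
      ring
  have key0 : ev (coneMap G l hl b a) w ≠ 0 := by
    rw [key]
    exact smul_ne_zero (mul_ne_zero (mul_ne_zero (pow_ne_zero _ hlb) hfb) hq0) hz
  rw [mk_defined, mk_app _ z hz hw0, mk_defined, mk_app _ w hw0 key0, mk_mem_coneSet,
    Projectivization.mk_eq_mk_iff']
  exact ⟨hw0, fun h => mk_congr_mem h h1 _ hprw h2, key0, _, key.symm⟩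

lemma not_subset_cone {m d : ℕ} {F : RatMap k m m} {A : Set (ProjSp k m)}
    {u : MvPolynomial (Fin (m + 1)) k} (hu : u.IsHomogeneous d)
    {l : MvPolynomial (Fin (m + 1)) k} (hl : l.IsHomogeneous 1) (a : Fin (m + 1) → k)
    {x : ProjSp k m} (hx : x ∈ A) (hxu : x ∉ zeros k u) (h1 : eval x.rep l ≠ 0)
    (h2 : eval (ev F x.rep) l ≠ 0) : ¬ coneSet a A ⊆ zeros k (bad F l u a) := by
  set z : Fin (m + 2) → k := Fin.snoc (α := fun _ => k) x.rep 0 with hzdef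
  have hp : pr a z = x.rep := by
    funext i
    simp [pr, hzdef]
  have hz : z ≠ 0 := by
    intro h
    apply x.rep_nonzero
    rw [← hp, h]; funext i; simp [pr]
  intro hsub
  have hmem : Projectivization.mk k z hz ∈ coneSet a A := by
    rw [mk_mem_coneSet]
    intro h
    exact mk_congr_mem h x.rep_nonzero 1 (by rw [hp, one_smul]) (by rwa [x.mk_rep])
  have := hsub hmem
  rw [mk_mem_zeros (bad_homog F hl hu a), eval_bad, hp] at this
  exact mul_ne_zero hxu (mul_ne_zero h1 h2) this

lemma exists_form [Infinite k] {m : ℕ} {ι : Type} [Finite ι] (v : ι → Fin (m + 1) → k)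
    (hv : ∀ i, v i ≠ 0) :
    ∃ l : MvPolynomial (Fin (m + 1)) k, l.IsHomogeneous 1 ∧ ∀ i, eval (v i) l ≠ 0 := by
  obtain ⟨f, hf⟩ := Module.exists_dual_forall_apply_ne_zero (K := k) v hv
  refine ⟨∑ i, C (f (Pi.single i 1)) * X i,
    IsHomogeneous.sum _ _ _ fun i _ => (isHomogeneous_X _ _).C_mul _, fun i => ?_⟩
  have : eval (v i) (∑ i, C (f (Pi.single i 1)) * X i) = f (v i) := by
    conv_rhs => rw [pi_eq_sum_univ' (v i)]
    simp [map_sum, mul_comm]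
  rw [this]
  exact hf i

lemma coneSet_univ {m : ℕ} (a : Fin (m + 1) → k) :
    coneSet a (Set.univ : Set (ProjSp k m)) = Set.univ := by
  ext z; simp [coneSet]

lemma coneOver_eq {m : ℕ} (p : ProjSp k (m + 1))
    (hp : p ∉ Set.range (hyperplaneEmbedding k m)) (A : Set (ProjSp k m)) (hA : A.Nonempty) :
    ∃ a : Fin (m + 1) → k, coneOver k p (hyperplaneEmbedding k m '' A) = coneSet a A := by
  have ht : p.rep (Fin.last _) ≠ 0 := by
    intro h
    apply hp
    have hv : extendZeroLinear k m (fun i => p.rep i.castSucc) = p.rep := by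
      funext i
      refine Fin.lastCases ?_ (fun j => ?_) i <;> simp [extendZeroLinear, h]
    have hv0 : (fun i => p.rep i.castSucc : Fin (m + 1) → k) ≠ 0 := by
      intro h0
      apply p.rep_nonzero
      rw [← hv, h0, map_zero]
    refine ⟨Projectivization.mk k _ hv0, ?_⟩
    rw [hyperplaneEmbedding, Projectivization.map_mk]
    conv_rhs => rw [← p.mk_rep]
    congr 1
  set t := p.rep (Fin.last _) with htdef
  have hemb : ∀ c : ProjSp k m, (hyperplaneEmbedding k m c).submodule =
      Submodule.span k {extendZeroLinear k m c.rep} := by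
    intro c
    conv_lhs => rw [← c.mk_rep]
    rw [hyperplaneEmbedding, Projectivization.map_mk, Projectivization.submodule_mk]
  have hline : ∀ (c : ProjSp k m) (z : ProjSp k (m + 1)),
      z ∈ lineThrough k p (hyperplaneEmbedding k m c) ↔
        ∃ α β : k, α • p.rep + β • extendZeroLinear k m c.rep = z.rep := by
    intro c z
    rw [lineThrough, Set.mem_ofPred_eq, hemb, p.submodule_eq, z.submodule_eq,
      Submodule.span_singleton_le_iff_mem, ← Submodule.span_union, Set.singleton_union,
      Submodule.mem_span_pair]
  refine ⟨fun i => p.rep i.castSucc / t, ?_⟩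
  have hprp : pr (fun i => p.rep i.castSucc / t) p.rep = 0 := by
    funext i
    simp only [pr, ← htdef, Pi.zero_apply]
    field_simp
    ring
  have hpre : ∀ (a c : Fin (m + 1) → k), pr a (extendZeroLinear k m c) = c := by
    intro a c
    funext i
    simp [pr, extendZeroLinear]
  have hpradd : ∀ (a : Fin (m + 1) → k) (z w : Fin (m + 2) → k),
      pr a (z + w) = pr a z + pr a w := by
    intro a z w
    funext i
    simp [pr]; ring
  ext z
  rw [coneOver]
  simp only [Set.mem_iUnion, Set.mem_image, exists_prop]
  constructor
  · rintro ⟨_, ⟨c, hc, rfl⟩, hz⟩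
    obtain ⟨α, β, h⟩ := (hline c z).1 hz
    intro h0
    refine mk_congr_mem h0 c.rep_nonzero β ?_ (by rwa [c.mk_rep])
    rw [← h, hpradd, pr_smul, pr_smul, hprp, hpre]
    simp
  · intro hz
    have main : ∃ c ∈ A, ∃ β : k, pr (fun i => p.rep i.castSucc / t) z.rep = β • c.rep := by
      by_cases h0 : pr (fun i => p.rep i.castSucc / t) z.rep = 0
      · obtain ⟨c, hc⟩ := hA
        exact ⟨c, hc, 0, by rw [h0, zero_smul]⟩
      · refine ⟨_, hz h0, ?_⟩
        obtain ⟨e, he⟩ := Projectivization.exists_smul_eq_mk_rep k _ h0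
        refine ⟨(e : k)⁻¹, ?_⟩
        rw [← he, Units.smul_def, smul_smul]
        simp
    obtain ⟨c, hc, β, h⟩ := main
    refine ⟨_, ⟨c, hc, rfl⟩, (hline c z).2 ⟨z.rep (Fin.last _) / t, β, ?_⟩⟩
    apply pr_ext (fun i => p.rep i.castSucc / t)
    · rw [hpradd, pr_smul, pr_smul, hprp, hpre, h]
      simp
    · simp only [Pi.add_apply, Pi.smul_apply, ← htdef, smul_eq_mul]
      simp [extendZeroLinear, ht]

end ConeProof

/-- Proposition `pro:easy` of the paper.
Let `C₁` and `C₂` be irreducible reduced divisors in `ℙᵐ` (`= ℙ^{n-1}`) that are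
Cremona equivalent, embed `ℙᵐ` as a hyperplane of `ℙ^{m+1}` (`= ℙⁿ`), and let
`Sᵢ ⊆ ℙ^{m+1}` be the cone over (the image of) `Cᵢ` with a vertex `pᵢ` outside this
hyperplane.  Then `S₁` is Cremona equivalent to `S₂`. -/
theorem cones_over_cremonaEquivalent_divisors_are_cremonaEquivalent
    (k : Type) [Field k] [IsAlgClosed k] [CharZero k] (m : ℕ)
    (C₁ C₂ : Set (ProjSp k m))
    (hC₁ : IsIrredDivisor k C₁) (hC₂ : IsIrredDivisor k C₂)
    (hcrem : CremonaEquivalent k C₁ C₂)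
    (p₁ p₂ : ProjSp k (m + 1))
    (hp₁ : p₁ ∉ Set.range (hyperplaneEmbedding k m))
    (hp₂ : p₂ ∉ Set.range (hyperplaneEmbedding k m))
    (S₁ S₂ : Set (ProjSp k (m + 1)))
    (hS₁ : S₁ = coneOver k p₁ (hyperplaneEmbedding k m '' C₁))
    (hS₂ : S₂ = coneOver k p₂ (hyperplaneEmbedding k m '' C₂)) :
    CremonaEquivalent k S₁ S₂ := by
  obtain ⟨F, G, ⟨u, v, du, dv, hu, hv, hAu, hBv, H1, H2⟩,
    ⟨u', v', du', dv', hu', hv', hAu', hBv', H1', H2'⟩⟩ := hcrem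
  obtain ⟨x1, hx1, hx1u⟩ := Set.not_subset.1 hAu
  obtain ⟨x2, hx2, hx2u⟩ := Set.not_subset.1 hBv
  obtain ⟨x3, hx3, hx3u⟩ := Set.not_subset.1 hAu'
  obtain ⟨x4, hx4, hx4u⟩ := Set.not_subset.1 hBv'
  obtain ⟨a, ha⟩ := ConeProof.coneOver_eq p₁ hp₁ C₁ ⟨x3, hx3⟩
  obtain ⟨b, hb⟩ := ConeProof.coneOver_eq p₂ hp₂ C₂ ⟨x4, hx4⟩
  have : Infinite k := IsAlgClosed.instInfinite
  obtain ⟨l, hl, hne⟩ := ConeProof.exists_form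
    ![x1.rep, x2.rep, x3.rep, x4.rep, ConeProof.ev F x1.rep, ConeProof.ev G x2.rep,
      ConeProof.ev F x3.rep, ConeProof.ev G x4.rep] (by
      intro i
      fin_cases i
      · exact x1.rep_nonzero
      · exact x2.rep_nonzero
      · exact x3.rep_nonzero
      · exact x4.rep_nonzero
      · exact (H1 x1 ⟨hx1, hx1u⟩).1
      · exact (H2 x2 ⟨hx2, hx2u⟩).1
      · exact (H1' x3 ⟨hx3, hx3u⟩).1
      · exact (H2' x4 ⟨hx4, hx4u⟩).1)
  refine ⟨ConeProof.coneMap F l hl a b, ConeProof.coneMap G l hl b a, ?_, ?_⟩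
  · rw [← ConeProof.coneSet_univ a]
    nth_rewrite 2 [ConeProof.coneSet_univ a]
    rw [← ConeProof.coneSet_univ b]
    exact ⟨_, _, _, _, ConeProof.bad_homog F hl hu a, ConeProof.bad_homog G hl hv b,
      ConeProof.not_subset_cone hu hl a hx1 hx1u (hne 0) (hne 4),
      ConeProof.not_subset_cone hv hl b hx2 hx2u (hne 1) (hne 5),
      ConeProof.half_cone hu H1 hl a b, ConeProof.half_cone hv H2 hl b a⟩
  · rw [hS₁, hS₂, ha, hb]
    exact ⟨_, _, _, _, ConeProof.bad_homog F hl hu' a, ConeProof.bad_homog G hl hv' b,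
      ConeProof.not_subset_cone hu' hl a hx3 hx3u (hne 2) (hne 6),
      ConeProof.not_subset_cone hv' hl b hx4 hx4u (hne 3) (hne 7),
      ConeProof.half_cone hu' H1' hl a b, ConeProof.half_cone hv' H2' hl b a⟩
end
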